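/- There is a uniform constant C such that for all scalar u, v ∈ C₀^∞(ℝ×ℝ³) and all t ≥ 0: ∫_{ℝ³} ⟨x⟩^{−2} |∂²u(t,x)| |v(t,x)| dx ≤ C⟨t⟩^{−1}( Σ_{|α|≤1} ‖Γ^α u'(t,·)‖₂ + ‖⟨t+r⟩□u(t,·)‖₂ ) · ‖⟨x⟩^{−2} v(t,·)‖₂ + C⟨t⟩^{−4/3}( Σ_{|α|≤1} ‖Γ^α u'(t,·)‖₂ + ‖⟨t+r⟩□u(t,·)‖₂ ) · ‖v'(t,·)‖₂, where |∂²u| denotes the sum of absolute values of all second space-time derivatives of u. -/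

import Mathlib

open MeasureTheory Real Finset

noncomputable section

/-- Points of space-time `ℝ×ℝ³`, written `X = (x₀,x₁,x₂,x₃)` with `x₀ = t`. -/
abbrev Pt : Type := Fin 4 → ℝ
/-- Points of space `ℝ³`. -/
abbrev Sp : Type := Fin 3 → ℝ

/-- Space-time partial derivative `∂_a`. -/
def pd (a : Fin 4) (u : Pt → ℝ) : Pt → ℝ := fun X => fderiv ℝ u X (Pi.single a 1)

/-- Rotation field `Ω_{ij} = x_i ∂_j - x_j ∂_i` (space-time indices). -/
def rot (i j : Fin 4) (u : Pt → ℝ) : Pt → ℝ := fun X => X i * pd j u X - X j * pd i u X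

/-- Scaling field `S = t ∂_t + x·∇_x = x^a ∂_a`. -/
def scal (u : Pt → ℝ) : Pt → ℝ := fun X => ∑ a, X a * pd a u X

/-- The eight vector fields `Γ = (∂, Ω, S)`. -/
def Gam : Fin 8 → (Pt → ℝ) → Pt → ℝ :=
  ![pd 0, pd 1, pd 2, pd 3, rot 1 2, rot 1 3, rot 2 3, scal]

/-- `Γ^α` for a multi-index `α` (a word in the eight fields) of length `m`. -/
def GamComp : ∀ {m : ℕ}, (Fin m → Fin 8) → (Pt → ℝ) → Pt → ℝ
  | 0, _, u => u
  | _ + 1, α, u => Gam (α 0) (GamComp (fun i => α i.succ) u)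

/-- Euclidean length `r = |x|` of a spatial point. -/
def rad (x : Sp) : ℝ := Real.sqrt (∑ i, (x i) ^ 2)

/-- Japanese bracket `⟨z⟩ = (1+z²)^{1/2}`. -/
def jb (z : ℝ) : ℝ := Real.sqrt (1 + z ^ 2)

/-- Euclidean norm `|∂u|` of the space-time gradient. -/
def gradNorm (u : Pt → ℝ) (X : Pt) : ℝ := Real.sqrt (∑ a, (pd a u X) ^ 2)

/-- The unit-speed d'Alembertian `□ = ∂_t² - Δ_x`. -/
def box1 (u : Pt → ℝ) : Pt → ℝ := fun X =>
  pd 0 (pd 0 u) X - ∑ j : Fin 3, pd j.succ (pd j.succ u) X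

/-- The d'Alembertian `∂_t² - c²Δ_x` with speed `c`. -/
def boxc (c : ℝ) (u : Pt → ℝ) : Pt → ℝ := fun X =>
  pd 0 (pd 0 u) X - c ^ 2 * ∑ j : Fin 3, pd j.succ (pd j.succ u) X

/-- The recurring right-hand factor
`Σ_{|α|≤1}‖Γ^α u'(t,·)‖₂ + ‖⟨t+r⟩(∂_t²-c²Δ)u(t,·)‖₂`. -/
def Qfac (cs : ℝ) (u : Pt → ℝ) (t : ℝ) : ℝ :=
  (∑ m ∈ Finset.range 2, ∑ α : Fin m → Fin 8,
      (∫ x : Sp, ∑ a, (GamComp α (pd a u) (Fin.cons t x)) ^ 2) ^ ((1:ℝ)/2))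
    + (∫ x : Sp, jb (t + rad x) ^ 2 * (boxc cs u (Fin.cons t x)) ^ 2) ^ ((1:ℝ)/2)

/-- `|∂²u|`: the sum of the absolute values of all second space-time derivatives. -/
def d2abs (u : Pt → ℝ) (X : Pt) : ℝ := ∑ a, ∑ b, |pd a (pd b u) X|

/-!
By Klainerman and Sideris, `S`, `Ω` and `□` control `|t - r| |∂_t ∂u|` and `|t - r| |Δu|` pointwise,
and an elliptic estimate with weight `W = 1 + (t - ⟨x⟩)² ~ ⟨t - r⟩²` upgrades the latter to the full
spatial Hessian, so that `√W |∂²u|` is bounded in `L²`. Cauchy-Schwarz then leaves the integral of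
`v² / (⟨x⟩⁴ W)`. Away from the cone `W⁻¹ ≲ ⟨t⟩⁻²`, which gives the first term. Near it `⟨x⟩ ~ ⟨t⟩`,
and a Hardy inequality whose vector field carries the profile `arctan (t - ⟨x⟩)`, with derivative
of size `W⁻¹`, bounds the integral of `v² / (⟨x⟩ W)` by `‖∇v‖₂²`; the remaining `⟨x⟩⁻³` gives the
decay `⟨t⟩^(-3/2)` of the second term after taking the square root.
-/

section WeightedL2

variable {ι : Type*} [Fintype ι] {w f g : (ι → ℝ) → ℝ}

lemma integrable_mul_sq (hw : Continuous w) (hf : Continuous f) (hfc : HasCompactSupport f) :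
    Integrable fun x => w x * f x ^ 2 :=
  (hw.mul (hf.pow 2)).integrable_of_hasCompactSupport (.intro hfc fun x hx => by
    simp [image_eq_zero_of_notMem_tsupport hx])

lemma integral_mul_le_sqrt_mul_sqrt (hw : Continuous w) (hw_pos : ∀ x, 0 < w x)
    (hf : Continuous f) (hfc : HasCompactSupport f) (hg : Continuous g)
    (hgc : HasCompactSupport g) :
    ∫ x, f x * g x ≤ √(∫ x, w x * f x ^ 2) * √(∫ x, g x ^ 2 / w x) := by
  have hw_ne (x : ι → ℝ) : √(w x) ≠ 0 := (sqrt_pos.2 (hw_pos x)).ne'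
  have hf_memLp : MemLp (fun x => √(w x) * f x) (ENNReal.ofReal 2) :=
    (hw.sqrt.mul hf).memLp_of_hasCompactSupport hfc.mul_left
  have hg_memLp : MemLp (fun x => (√(w x))⁻¹ * g x) (ENNReal.ofReal 2) :=
    ((hw.sqrt.inv₀ hw_ne).mul hg).memLp_of_hasCompactSupport hgc.mul_left
  calc ∫ x, f x * g x ≤ ‖∫ x, f x * g x‖ := le_norm_self _
    _ ≤ ∫ x, ‖f x * g x‖ := norm_integral_le_integral_norm _
    _ = ∫ x, ‖√(w x) * f x‖ * ‖(√(w x))⁻¹ * g x‖ := by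
        congr! 2 with x
        rw [← norm_mul, mul_mul_mul_comm, mul_inv_cancel₀ (hw_ne x), one_mul]
    _ ≤ _ := integral_mul_norm_le_Lp_mul_Lq HolderConjugate.two_two hf_memLp hg_memLp
    _ = √(∫ x, w x * f x ^ 2) * √(∫ x, g x ^ 2 / w x) := by
        simp only [rpow_two, ← sqrt_eq_rpow, norm_eq_abs, sq_abs, inv_mul_eq_div, mul_pow,
          div_pow, sq_sqrt (hw_pos _).le]

end WeightedL2

section PartialDeriv

variable {ι : Type*} [DecidableEq ι]

/-- The partial derivative `∂ᵢ f` of a function on `ℝ^ι`. On space-time, `ι = Fin 4`, this is `pd`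
by definition; the general index set serves the estimates on `ℝⁿ`. -/
def partialDeriv (i : ι) (f : (ι → ℝ) → ℝ) : (ι → ℝ) → ℝ :=
  fun x => fderiv ℝ f x (Pi.single i 1)

lemma partialDeriv_eq_zero_of_notMem_tsupport {f : (ι → ℝ) → ℝ} {x : ι → ℝ}
    (hx : x ∉ tsupport f) (i : ι) : partialDeriv i f x = 0 := by
  rw [partialDeriv, fderiv_of_notMem_tsupport ℝ hx, zero_apply]

lemma tsupport_partialDeriv_subset (f : (ι → ℝ) → ℝ) (i : ι) :
    tsupport (partialDeriv i f) ⊆ tsupport f :=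
  tsupport_fderiv_apply_subset ℝ _

lemma hasCompactSupport_partialDeriv {f : (ι → ℝ) → ℝ} (hf : HasCompactSupport f) (i : ι) :
    HasCompactSupport (partialDeriv i f) :=
  hf.fderiv_apply ℝ _

lemma partialDeriv_apply (i j : ι) (x : ι → ℝ) :
    partialDeriv i (fun y => y j) x = (Pi.single i 1 : ι → ℝ) j := by
  rw [partialDeriv, (hasFDerivAt_apply j x).fderiv, ContinuousLinearMap.proj_apply]

lemma partialDeriv_mul [Finite ι] {f g : (ι → ℝ) → ℝ} {x : ι → ℝ} (hf : DifferentiableAt ℝ f x)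
    (hg : DifferentiableAt ℝ g x) (i : ι) :
    partialDeriv i (fun y => f y * g y) x =
      partialDeriv i f x * g x + f x * partialDeriv i g x := by
  have := Fintype.ofFinite ι
  simp only [partialDeriv, fderiv_fun_mul hf hg, add_apply, smul_apply, smul_eq_mul]
  ring

lemma partialDeriv_comp [Finite ι] {f : (ι → ℝ) → ℝ} {φ : ℝ → ℝ} {φ' : ℝ} {x : ι → ℝ}
    (hφ : HasDerivAt φ φ' (f x)) (hf : DifferentiableAt ℝ f x) (i : ι) :
    partialDeriv i (fun y => φ (f y)) x = φ' * partialDeriv i f x := by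
  have := Fintype.ofFinite ι
  have h : fderiv ℝ (fun y => φ (f y)) x = φ' • fderiv ℝ f x :=
    (hφ.comp_hasFDerivAt x hf.hasFDerivAt).fderiv
  rw [partialDeriv, h, smul_apply, smul_eq_mul, partialDeriv]

variable [Fintype ι]

lemma contDiff_partialDeriv {f : (ι → ℝ) → ℝ} {n : WithTop ℕ∞} (hf : ContDiff ℝ (n + 1) f)
    (i : ι) : ContDiff ℝ n (partialDeriv i f) :=
  (hf.fderiv_right le_rfl).clm_apply contDiff_const

lemma continuous_partialDeriv {f : (ι → ℝ) → ℝ} (hf : ContDiff ℝ 1 f) (i : ι) :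
    Continuous (partialDeriv i f) :=
  (contDiff_partialDeriv (n := 0) (by simpa using hf) i).continuous

lemma partialDeriv_comm {f : (ι → ℝ) → ℝ} (hf : ContDiff ℝ 2 f) (i j : ι) (x : ι → ℝ) :
    partialDeriv i (partialDeriv j f) x = partialDeriv j (partialDeriv i f) x := by
  have hd : DifferentiableAt ℝ (fderiv ℝ f) x :=
    (hf.fderiv_right (m := 1) (by norm_num)).differentiable one_ne_zero x
  have partialDeriv_partialDeriv (k l : ι) : partialDeriv k (partialDeriv l f) x =
      fderiv ℝ (fderiv ℝ f) x (Pi.single k 1) (Pi.single l 1) := by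
    change fderiv ℝ (fun y => fderiv ℝ f y (Pi.single l 1)) x (Pi.single k 1) = _
    rw [fderiv_clm_apply hd (differentiableAt_const _)]
    simp
  rw [partialDeriv_partialDeriv, partialDeriv_partialDeriv]
  exact hf.contDiffAt.isSymmSndFDerivAt (by simp) _ _

lemma integrable_partialDeriv {f : (ι → ℝ) → ℝ} (hf : ContDiff ℝ 1 f)
    (hfc : HasCompactSupport f) (i : ι) : Integrable (partialDeriv i f) :=
  (continuous_partialDeriv hf i).integrable_of_hasCompactSupport
    (hasCompactSupport_partialDeriv hfc i)

lemma integral_partialDeriv_eq_zero {f : (ι → ℝ) → ℝ} (hf : ContDiff ℝ 1 f)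
    (hfc : HasCompactSupport f) (i : ι) : ∫ x, partialDeriv i f x = 0 := by
  have hf_int : Integrable f := hf.continuous.integrable_of_hasCompactSupport hfc
  have hf'_int : Integrable fun x => fderiv ℝ f x (Pi.single i 1) :=
    integrable_partialDeriv hf hfc i
  simpa [partialDeriv] using integral_mul_fderiv_eq_neg_fderiv_mul_of_integrable
    (μ := (volume : Measure (ι → ℝ))) (f := fun _ => (1 : ℝ)) (v := Pi.single i 1) (by simp)
    (by simpa using hf'_int) (by simpa using hf_int) (by fun_prop)
    (fun x _ => hf.differentiable one_ne_zero x)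

end PartialDeriv

section WeightedHessian

/- After multiplication by `w > 0`, both cross terms are split by `|∇w| ≤ 2√w` and AM-GM. -/
lemma sum_cross_terms_le {ι : Type*} [Fintype ι] {w : ℝ} (hw : 0 < w) {p : ι → ℝ}
    (hp : ∑ i, p i ^ 2 ≤ 4 * w) (q : ι → ℝ) (H : ι → ι → ℝ) :
    ∑ i, ∑ j, (p j * q j * H i i - p i * q j * H i j) ≤
      w / 2 * ∑ i, ∑ j, H i j ^ 2 + w * (∑ i, H i i) ^ 2 + 3 * ∑ j, q j ^ 2 := by
  have amgm (c a b : ℝ) (hc : 0 < c) : a * b ≤ a ^ 2 / (4 * c) + c * b ^ 2 := by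
    have h : a ^ 2 / (4 * c) + c * b ^ 2 - a * b = (a - 2 * c * b) ^ 2 / (4 * c) := by
      field_simp
      ring
    linarith [show 0 ≤ (a - 2 * c * b) ^ 2 / (4 * c) by positivity]
  have hpq : (∑ i, p i ^ 2) * ∑ j, q j ^ 2 ≤ 4 * w * ∑ j, q j ^ 2 := by gcongr
  have trace_term : (∑ j, p j * q j) * ∑ i, H i i ≤ ∑ j, q j ^ 2 + w * (∑ i, H i i) ^ 2 := by
    have h : (∑ j, p j * q j) ^ 2 / (4 * w) ≤ ∑ j, q j ^ 2 := by
      rw [div_le_iff₀ (by positivity)]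
      linarith [sum_mul_sq_le_sq_mul_sq univ p q]
    linarith [amgm w (∑ j, p j * q j) (∑ i, H i i) hw]
  have hessian_term : ∑ i, ∑ j, -(p i * q j * H i j) ≤
      2 * ∑ j, q j ^ 2 + w / 2 * ∑ i, ∑ j, H i j ^ 2 := by
    calc ∑ i, ∑ j, -(p i * q j * H i j)
        ≤ ∑ i, ∑ j, ((p i ^ 2 * q j ^ 2) / (2 * w) + w / 2 * H i j ^ 2) :=
          sum_le_sum fun i _ => sum_le_sum fun j _ => by
            have h := amgm (w / 2) (-(p i * q j)) (H i j) (by positivity)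
            rwa [show 4 * (w / 2) = 2 * w by ring, neg_sq, mul_pow, neg_mul] at h
      _ = (∑ i, p i ^ 2) * (∑ j, q j ^ 2) / (2 * w) + w / 2 * ∑ i, ∑ j, H i j ^ 2 := by
          simp only [sum_add_distrib, ← mul_sum, ← sum_div, ← sum_mul]
      _ ≤ _ := by
          gcongr
          rw [div_le_iff₀ (by positivity)]
          linarith
  calc ∑ i, ∑ j, (p j * q j * H i i - p i * q j * H i j)
      = (∑ j, p j * q j) * (∑ i, H i i) + ∑ i, ∑ j, -(p i * q j * H i j) := by
        rw [mul_comm, sum_mul_sum]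
        simp only [← sum_add_distrib]
        exact sum_congr rfl fun i _ => sum_congr rfl fun j _ => by ring
    _ ≤ _ := by linarith

variable {ι : Type*} [Fintype ι] [DecidableEq ι] {w f g h : (ι → ℝ) → ℝ}

/-- The two-dimensional Jacobian determinant `∂(g, h) / ∂(xᵢ, xⱼ)`, a null Lagrangian: the
second-order integration by parts of the weighted Hessian estimate is that its integral vanishes. -/
def jacobian (i j : ι) (g h : (ι → ℝ) → ℝ) : (ι → ℝ) → ℝ := fun x =>
  partialDeriv i g x * partialDeriv j h x - partialDeriv j g x * partialDeriv i h x

lemma integrable_jacobian (hg : ContDiff ℝ 1 g) (hh : ContDiff ℝ 1 h) (hhc : HasCompactSupport h)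
    (i j : ι) : Integrable (jacobian i j g h) := by
  have hg' := continuous_partialDeriv hg
  have hh' := continuous_partialDeriv hh
  have hhc' := hasCompactSupport_partialDeriv hhc
  exact (((hg' i).mul (hh' j)).sub ((hg' j).mul (hh' i))).integrable_of_hasCompactSupport
    ((hhc' j).mul_left.sub (hhc' i).mul_left)

lemma integral_jacobian_eq_zero (hg : ContDiff ℝ 1 g) (hh : ContDiff ℝ 2 h)
    (hhc : HasCompactSupport h) (i j : ι) : ∫ x, jacobian i j g h x = 0 := by
  have hh' (k : ι) : ContDiff ℝ 1 (partialDeriv k h) := contDiff_partialDeriv hh k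
  have hgh (k : ι) : ContDiff ℝ 1 fun x => g x * partialDeriv k h x := hg.mul (hh' k)
  have hghc (k : ι) : HasCompactSupport fun x => g x * partialDeriv k h x :=
    (hasCompactSupport_partialDeriv hhc k).mul_left
  have jacobian_eq_sub (x : ι → ℝ) : jacobian i j g h x =
      partialDeriv i (fun y => g y * partialDeriv j h y) x -
        partialDeriv j (fun y => g y * partialDeriv i h y) x := by
    have hg_diff := hg.differentiable one_ne_zero x
    have hh_diff (k : ι) := (hh' k).differentiable one_ne_zero x
    rw [partialDeriv_mul hg_diff (hh_diff j), partialDeriv_mul hg_diff (hh_diff i),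
      partialDeriv_comm hh i j, jacobian]
    ring
  simp only [jacobian_eq_sub]
  rw [integral_sub (integrable_partialDeriv (hgh j) (hghc j) i)
      (integrable_partialDeriv (hgh i) (hghc i) j),
    integral_partialDeriv_eq_zero (hgh j) (hghc j), integral_partialDeriv_eq_zero (hgh i) (hghc i),
    sub_zero]

lemma integrable_sum_jacobian {g h : ι → (ι → ℝ) → ℝ} (hg : ∀ j, ContDiff ℝ 1 (g j))
    (hh : ∀ i, ContDiff ℝ 1 (h i)) (hhc : ∀ i, HasCompactSupport (h i)) :
    Integrable fun x => ∑ i, ∑ j, jacobian i j (g j) (h i) x :=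
  integrable_finsetSum _ fun i _ => integrable_finsetSum _ fun j _ =>
    integrable_jacobian (hg j) (hh i) (hhc i) i j

lemma integral_sum_jacobian_eq_zero {g h : ι → (ι → ℝ) → ℝ} (hg : ∀ j, ContDiff ℝ 1 (g j))
    (hh : ∀ i, ContDiff ℝ 2 (h i)) (hhc : ∀ i, HasCompactSupport (h i)) :
    ∫ x, ∑ i, ∑ j, jacobian i j (g j) (h i) x = 0 := by
  have hJ (i j : ι) : Integrable (jacobian i j (g j) (h i)) :=
    integrable_jacobian (hg j) ((hh i).of_le one_le_two) (hhc i) i j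
  rw [integral_finsetSum _ fun i _ => integrable_finsetSum _ fun j _ => hJ i j]
  refine sum_eq_zero fun i _ => ?_
  rw [integral_finsetSum _ fun j _ => hJ i j]
  exact sum_eq_zero fun j _ => integral_jacobian_eq_zero (hg j) (hh i) (hhc i) i j

lemma mul_sum_sq_hessian_le {x : ι → ℝ} (hw : DifferentiableAt ℝ w x) (hwx : 0 < w x)
    (hw' : ∑ i, partialDeriv i w x ^ 2 ≤ 4 * w x) (hf : ContDiff ℝ 2 f) :
    w x * ∑ i, ∑ j, partialDeriv i (partialDeriv j f) x ^ 2 ≤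
      2 * ∑ i, ∑ j, jacobian i j (fun y => w y * partialDeriv j f y) (partialDeriv i f) x +
        4 * (w x * (∑ i, partialDeriv i (partialDeriv i f) x) ^ 2) +
        6 * ∑ j, partialDeriv j f x ^ 2 := by
  have hf_diff (k : ι) : DifferentiableAt ℝ (partialDeriv k f) x :=
    (contDiff_partialDeriv hf k).differentiable one_ne_zero x
  have sum_jacobian :
      ∑ i, ∑ j, jacobian i j (fun y => w y * partialDeriv j f y) (partialDeriv i f) x =
        w x * ∑ i, ∑ j, partialDeriv i (partialDeriv j f) x ^ 2 -
          w x * (∑ i, partialDeriv i (partialDeriv i f) x) ^ 2 -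
          ∑ i, ∑ j, (partialDeriv j w x * partialDeriv j f x * partialDeriv i (partialDeriv i f) x -
            partialDeriv i w x * partialDeriv j f x * partialDeriv i (partialDeriv j f) x) := by
    rw [sq (∑ i, partialDeriv i (partialDeriv i f) x), sum_mul_sum]
    simp only [mul_sum, ← sum_sub_distrib]
    refine sum_congr rfl fun i _ => sum_congr rfl fun j _ => ?_
    rw [jacobian, partialDeriv_mul hw (hf_diff j), partialDeriv_mul hw (hf_diff j),
      partialDeriv_comm hf j i]
    ring
  have cross_terms_le := sum_cross_terms_le hwx hw' (fun j => partialDeriv j f x)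
    fun i j => partialDeriv i (partialDeriv j f) x
  linarith

lemma integral_mul_sum_sq_hessian_le (hw : ContDiff ℝ 1 w) (hw_pos : ∀ x, 0 < w x)
    (hw' : ∀ x, ∑ i, partialDeriv i w x ^ 2 ≤ 4 * w x) (hf : ContDiff ℝ 3 f)
    (hfc : HasCompactSupport f) :
    ∫ x, w x * ∑ i, ∑ j, partialDeriv i (partialDeriv j f) x ^ 2 ≤
      4 * (∫ x, w x * (∑ i, partialDeriv i (partialDeriv i f) x) ^ 2) +
        6 * ∫ x, ∑ j, partialDeriv j f x ^ 2 := by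
  have hf1 (k : ι) : ContDiff ℝ 2 (partialDeriv k f) := contDiff_partialDeriv hf k
  have hfc1 (k : ι) : HasCompactSupport (partialDeriv k f) := hasCompactSupport_partialDeriv hfc k
  have hcont1 (k : ι) : Continuous (partialDeriv k f) := (hf1 k).continuous
  have hcont2 (k l : ι) : Continuous (partialDeriv k (partialDeriv l f)) :=
    continuous_partialDeriv ((hf1 l).of_le one_le_two) k
  have hzero1 {x : ι → ℝ} (hx : x ∉ tsupport f) (k : ι) : partialDeriv k f x = 0 :=
    partialDeriv_eq_zero_of_notMem_tsupport hx k
  have hzero2 {x : ι → ℝ} (hx : x ∉ tsupport f) (k l : ι) :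
      partialDeriv k (partialDeriv l f) x = 0 :=
    partialDeriv_eq_zero_of_notMem_tsupport (fun h => hx (tsupport_partialDeriv_subset f l h)) k
  have hH_int : Integrable fun x => w x * ∑ i, ∑ j, partialDeriv i (partialDeriv j f) x ^ 2 :=
    (hw.continuous.mul (by fun_prop)).integrable_of_hasCompactSupport
      (.intro hfc fun x hx => by simp [hzero2 hx])
  have hΔ_int : Integrable fun x => w x * (∑ i, partialDeriv i (partialDeriv i f) x) ^ 2 :=
    (hw.continuous.mul (by fun_prop)).integrable_of_hasCompactSupport
      (.intro hfc fun x hx => by simp [hzero2 hx])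
  have hgrad_int : Integrable fun x => ∑ j, partialDeriv j f x ^ 2 :=
    Continuous.integrable_of_hasCompactSupport (by fun_prop)
      (.intro hfc fun x hx => by simp [hzero1 hx])
  have hwf (j : ι) : ContDiff ℝ 1 fun x => w x * partialDeriv j f x :=
    hw.mul ((hf1 j).of_le one_le_two)
  have hJ_int := integrable_sum_jacobian hwf (fun i => (hf1 i).of_le one_le_two) hfc1
  refine (integral_mono hH_int
    (((hJ_int.const_mul 2).add (hΔ_int.const_mul 4)).add (hgrad_int.const_mul 6)) fun x =>
      mul_sum_sq_hessian_le (hw.differentiable one_ne_zero x) (hw_pos x) (hw' x)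
        (hf.of_le (by norm_num))).trans_eq ?_
  rw [integral_add' ((hJ_int.const_mul 2).add (hΔ_int.const_mul 4)) (hgrad_int.const_mul 6),
    integral_add' (hJ_int.const_mul 2) (hΔ_int.const_mul 4), integral_const_mul,
    integral_const_mul, integral_const_mul, integral_sum_jacobian_eq_zero hwf hf1 hfc1]
  ring

end WeightedHessian

section JapaneseBracket

variable {ι : Type*} [Fintype ι]

/-- The Japanese bracket `⟨x⟩ = (1 + |x|²)^{1/2}` on `ℝ^ι`, with `|x|` the Euclidean length; a
smooth substitute for `|x|`. -/
def japaneseBracket (x : ι → ℝ) : ℝ := √(1 + ∑ i, x i ^ 2)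

lemma japaneseBracket_sq (x : ι → ℝ) : japaneseBracket x ^ 2 = 1 + ∑ i, x i ^ 2 :=
  sq_sqrt (by positivity)

lemma one_le_japaneseBracket (x : ι → ℝ) : 1 ≤ japaneseBracket x :=
  one_le_sqrt.2 (le_add_of_nonneg_right (by positivity))

lemma japaneseBracket_pos (x : ι → ℝ) : 0 < japaneseBracket x :=
  zero_lt_one.trans_le (one_le_japaneseBracket x)

lemma contDiff_japaneseBracket {n : WithTop ℕ∞} :
    ContDiff ℝ n (japaneseBracket : (ι → ℝ) → ℝ) :=
  ContDiff.sqrt (by fun_prop) fun x => by positivity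

lemma partialDeriv_japaneseBracket [DecidableEq ι] (j : ι) (x : ι → ℝ) :
    partialDeriv j japaneseBracket x = x j / japaneseBracket x := by
  have h : HasFDerivAt (fun y : ι → ℝ => 1 + ∑ i, y i ^ 2) _ x :=
    (HasFDerivAt.fun_sum fun i _ =>
      (hasFDerivAt_apply (𝕜 := ℝ) (F' := fun _ => ℝ) i x).pow 2).const_add 1
  have h_sqrt : fderiv ℝ japaneseBracket x = _ := (h.sqrt (by positivity)).fderiv
  rw [partialDeriv, h_sqrt]
  simp [Pi.single_apply, japaneseBracket]
  field_simp

/-- The weight `1 + (t - ⟨x⟩)²`, a smooth version of `⟨t - r⟩²`, where `r = |x|`. -/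
def coneWeight (t : ℝ) (x : ι → ℝ) : ℝ := 1 + (t - japaneseBracket x) ^ 2

lemma coneWeight_pos (t : ℝ) (x : ι → ℝ) : 0 < coneWeight t x := by
  rw [coneWeight]
  positivity

lemma contDiff_coneWeight {n : WithTop ℕ∞} (t : ℝ) :
    ContDiff ℝ n (coneWeight t : (ι → ℝ) → ℝ) :=
  contDiff_const.add ((contDiff_const.sub contDiff_japaneseBracket).pow 2)

lemma sum_sq_partialDeriv_coneWeight_le [DecidableEq ι] (t : ℝ) (x : ι → ℝ) :
    ∑ j, partialDeriv j (coneWeight t) x ^ 2 ≤ 4 * coneWeight t x := by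
  have partialDeriv_coneWeight (j : ι) : partialDeriv j (coneWeight t) x =
      -2 * (t - japaneseBracket x) * (x j / japaneseBracket x) := by
    have h : HasDerivAt (fun y => 1 + (t - y) ^ 2) (-2 * (t - japaneseBracket x))
        (japaneseBracket x) :=
      ((((hasDerivAt_id' _).const_sub t).fun_pow 2).const_add 1).congr_deriv (by push_cast; ring)
    rw [← partialDeriv_japaneseBracket]
    exact partialDeriv_comp h (contDiff_japaneseBracket.differentiable one_ne_zero x) j
  have sum_le_one : ∑ j, (x j / japaneseBracket x) ^ 2 ≤ 1 := by
    simp only [div_pow, ← sum_div]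
    rw [div_le_one (by have := japaneseBracket_pos x; positivity), japaneseBracket_sq]
    linarith
  calc ∑ j, partialDeriv j (coneWeight t) x ^ 2
      = 4 * (t - japaneseBracket x) ^ 2 * ∑ j, (x j / japaneseBracket x) ^ 2 := by
        simp only [partialDeriv_coneWeight, mul_sum]
        exact sum_congr rfl fun j _ => by ring
    _ ≤ 4 * (t - japaneseBracket x) ^ 2 * 1 := by gcongr
    _ ≤ 4 * coneWeight t x := by rw [coneWeight]; linarith

end JapaneseBracket

section Hardy

variable {ι : Type*} [Fintype ι] [DecidableEq ι] {f : (ι → ℝ) → ℝ}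

/- Integrate `0 ≤ |∇f + f V|²` and `div (f² V)`. -/
lemma integral_mul_sq_le_integral_sum_sq_partialDeriv {V : ι → (ι → ℝ) → ℝ} {c : (ι → ℝ) → ℝ}
    (hV : ∀ i, ContDiff ℝ 1 (V i)) (hc : Continuous c)
    (hcV : ∀ x, c x ≤ ∑ i, partialDeriv i (V i) x - ∑ i, V i x ^ 2)
    (hf : ContDiff ℝ 1 f) (hfc : HasCompactSupport f) :
    ∫ x, c x * f x ^ 2 ≤ ∫ x, ∑ i, partialDeriv i f x ^ 2 := by
  have hVf (i : ι) : ContDiff ℝ 1 fun x => V i x * (f x * f x) := (hV i).mul (hf.mul hf)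
  have hVfc (i : ι) : HasCompactSupport fun x => V i x * (f x * f x) := hfc.mul_left.mul_left
  have hf' (i : ι) := continuous_partialDeriv hf i
  have hcf_int : Integrable fun x => c x * f x ^ 2 :=
    (hc.mul (hf.continuous.pow 2)).integrable_of_hasCompactSupport
      (.intro hfc fun x hx => by simp [image_eq_zero_of_notMem_tsupport hx])
  have grad_int : Integrable fun x => ∑ i, partialDeriv i f x ^ 2 :=
    Continuous.integrable_of_hasCompactSupport (by fun_prop)
      (.intro hfc fun x hx => by simp [partialDeriv_eq_zero_of_notMem_tsupport hx])
  have div_int (i : ι) := integrable_partialDeriv (hVf i) (hVfc i) i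
  have pointwise (x : ι → ℝ) : c x * f x ^ 2 ≤
      ∑ i, partialDeriv i f x ^ 2 + ∑ i, partialDeriv i (fun y => V i y * (f y * f y)) x := by
    refine (mul_le_mul_of_nonneg_right (hcV x) (sq_nonneg _)).trans ?_
    rw [← sum_sub_distrib, sum_mul, ← sum_add_distrib]
    refine sum_le_sum fun i _ => ?_
    have hf_diff := hf.differentiable one_ne_zero x
    rw [partialDeriv_mul ((hV i).differentiable one_ne_zero x) (hf_diff.fun_mul hf_diff),
      partialDeriv_mul hf_diff hf_diff]
    linarith [sq_nonneg (partialDeriv i f x + V i x * f x)]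
  refine (integral_mono hcf_int (grad_int.add (integrable_finsetSum _ fun i _ => div_int i))
    pointwise).trans_eq ?_
  rw [integral_add' grad_int (integrable_finsetSum _ fun i _ => div_int i),
    integral_finsetSum _ fun i _ => div_int i,
    sum_eq_zero fun i _ => integral_partialDeriv_eq_zero (hVf i) (hVfc i) i, add_zero]

lemma sum_partialDeriv_comp_japaneseBracket_mul_apply {ψ : ℝ → ℝ} {ψ' : ℝ} {x : ι → ℝ}
    (hψ : HasDerivAt ψ ψ' (japaneseBracket x)) :
    ∑ i, partialDeriv i (fun y => ψ (japaneseBracket y) * y i) x =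
      ψ' * (∑ i, x i ^ 2) / japaneseBracket x + Fintype.card ι * ψ (japaneseBracket x) := by
  have hb : DifferentiableAt ℝ japaneseBracket x :=
    contDiff_japaneseBracket.differentiable one_ne_zero x
  have hψb : DifferentiableAt ℝ (fun y => ψ (japaneseBracket y)) x :=
    hψ.differentiableAt.comp x hb
  have (i : ι) : partialDeriv i (fun y => ψ (japaneseBracket y) * y i) x =
      ψ' * x i ^ 2 / japaneseBracket x + ψ (japaneseBracket x) := by
    rw [partialDeriv_mul hψb (differentiableAt_apply i x), partialDeriv_comp hψ hb,
      partialDeriv_japaneseBracket, partialDeriv_apply, Pi.single_eq_same]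
    ring
  simp only [this, sum_add_distrib, ← sum_div, ← mul_sum, sum_const, card_univ, nsmul_eq_mul]

lemma deriv_mul_le_sum_partialDeriv_sub_sum_sq (hι : 3 ≤ Fintype.card ι) {φ : ℝ → ℝ} {x : ι → ℝ}
    (hφ : DifferentiableAt ℝ φ (japaneseBracket x)) (hφ_nonneg : 0 ≤ φ (japaneseBracket x))
    (hφ_le_one : φ (japaneseBracket x) ≤ 1) :
    deriv φ (japaneseBracket x) * (japaneseBracket x ^ 2 - 1) / japaneseBracket x ^ 3 ≤
      ∑ i, partialDeriv i (fun y => φ (japaneseBracket y) / japaneseBracket y ^ 2 * y i) x -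
        ∑ i, (φ (japaneseBracket x) / japaneseBracket x ^ 2 * x i) ^ 2 := by
  have hx : ∑ i, x i ^ 2 = japaneseBracket x ^ 2 - 1 := by rw [japaneseBracket_sq]; ring
  have hb_pos := japaneseBracket_pos x
  have hb_one := one_le_japaneseBracket x
  have hn : (3 : ℝ) ≤ Fintype.card ι := mod_cast hι
  have hψ : HasDerivAt (fun y => φ y / y ^ 2) (deriv φ (japaneseBracket x) / japaneseBracket x ^ 2
      - 2 * φ (japaneseBracket x) / japaneseBracket x ^ 3) (japaneseBracket x) :=
    (hφ.hasDerivAt.fun_div ((hasDerivAt_id' _).fun_pow 2) (pow_ne_zero 2 hb_pos.ne')).congr_deriv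
      (by field_simp; ring)
  rw [sum_partialDeriv_comp_japaneseBracket_mul_apply hψ]
  simp only [mul_pow, ← mul_sum, hx]
  have card_term : 0 ≤ ((Fintype.card ι : ℝ) - 3) * japaneseBracket x ^ 2 :=
    mul_nonneg (sub_nonneg.2 hn) (sq_nonneg _)
  have profile_term : 0 ≤ (1 - φ (japaneseBracket x)) * (japaneseBracket x ^ 2 - 1) :=
    mul_nonneg (sub_nonneg.2 hφ_le_one) (sub_nonneg.2 (one_le_pow₀ hb_one))
  rw [← sub_nonneg]
  calc 0 ≤ φ (japaneseBracket x) * (((Fintype.card ι : ℝ) - 3) * japaneseBracket x ^ 2 + 3 +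
          (1 - φ (japaneseBracket x)) * (japaneseBracket x ^ 2 - 1)) / japaneseBracket x ^ 4 :=
        div_nonneg (mul_nonneg hφ_nonneg (by linarith)) (by positivity)
    _ = _ := by
        field_simp
        ring

/- Take the vector field `φ(⟨x⟩) x / ⟨x⟩²`. For constant `φ` this is the classical choice; the
derivative of a nonconstant `φ` is the gain. -/
lemma integral_deriv_mul_sq_le (hι : 3 ≤ Fintype.card ι) {φ : ℝ → ℝ} (hφ : ContDiff ℝ 1 φ)
    (hφ_nonneg : ∀ y, 0 ≤ φ y) (hφ_le_one : ∀ y, φ y ≤ 1) (hf : ContDiff ℝ 1 f)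
    (hfc : HasCompactSupport f) :
    ∫ x, deriv φ (japaneseBracket x) * (japaneseBracket x ^ 2 - 1) / japaneseBracket x ^ 3 *
        f x ^ 2 ≤
      ∫ x, ∑ i, partialDeriv i f x ^ 2 := by
  have hb : ContDiff ℝ 1 (japaneseBracket : (ι → ℝ) → ℝ) := contDiff_japaneseBracket
  have hb_ne (x : ι → ℝ) : japaneseBracket x ≠ 0 := (japaneseBracket_pos x).ne'
  have hV (i : ι) : ContDiff ℝ 1 fun x : ι → ℝ =>
      φ (japaneseBracket x) / japaneseBracket x ^ 2 * x i :=
    ((hφ.comp hb).div (hb.pow 2) fun x => pow_ne_zero 2 (hb_ne x)).mul (contDiff_apply ℝ ℝ i)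
  have hφ' : Continuous (deriv φ) := hφ.continuous_deriv le_rfl
  refine integral_mul_sq_le_integral_sum_sq_partialDeriv hV ?_ (fun x => ?_) hf hfc
  · exact ((hφ'.comp hb.continuous).mul ((hb.continuous.pow 2).sub continuous_const)).div
      (hb.continuous.pow 3) fun x => pow_ne_zero 3 (hb_ne x)
  · exact deriv_mul_le_sum_partialDeriv_sub_sum_sq hι (hφ.differentiable one_ne_zero _)
      (hφ_nonneg _) (hφ_le_one _)

lemma integral_div_coneWeight_mul_sq_le (hι : 3 ≤ Fintype.card ι) (hf : ContDiff ℝ 1 f)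
    (hfc : HasCompactSupport f) (t : ℝ) :
    ∫ x, (japaneseBracket x ^ 2 - 1) / (japaneseBracket x ^ 3 * coneWeight t x) * f x ^ 2 ≤
      π * ∫ x, ∑ i, partialDeriv i f x ^ 2 := by
  have hφ (y : ℝ) : HasDerivAt (fun y => 1 / 2 - arctan (t - y) / π)
      ((1 + (t - y) ^ 2)⁻¹ / π) y :=
    ((((hasDerivAt_id' y).const_sub t).arctan.div_const π).const_sub _).congr_deriv
      (by field_simp)
  have hφ_contDiff : ContDiff ℝ 1 fun y => 1 / 2 - arctan (t - y) / π :=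
    contDiff_const.sub ((contDiff_arctan.comp (contDiff_const.sub contDiff_id)).div_const π)
  have h := integral_deriv_mul_sq_le hι hφ_contDiff (fun y => ?_) (fun y => ?_) hf hfc
  · refine Eq.trans_le ?_ (mul_le_mul_of_nonneg_left h pi_nonneg)
    rw [← integral_const_mul]
    refine integral_congr_ae (.of_forall fun x => ?_)
    simp only [(hφ _).deriv, coneWeight]
    field_simp
  · rw [sub_nonneg, div_le_div_iff₀ pi_pos two_pos]
    linarith [arctan_lt_pi_div_two (t - y)]
  · rw [sub_le_comm, le_div_iff₀ pi_pos]
    linarith [neg_pi_div_two_lt_arctan (t - y)]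

end Hardy

section WeightedLocalEnergy

lemma jb_sq (z : ℝ) : jb z ^ 2 = 1 + z ^ 2 := sq_sqrt (by positivity)

lemma jb_pos (z : ℝ) : 0 < jb z := sqrt_pos.2 (by positivity)

lemma one_le_jb (z : ℝ) : 1 ≤ jb z := one_le_sqrt.2 (le_add_of_nonneg_right (sq_nonneg z))

/- Away from the cone `⟨t⟩² ≤ 17 ⟨t - ρ⟩²`, and the first term suffices; near it `⟨t⟩ ≤ 3 ρ`, and
`36 (ρ² - 1) ρ`, comparable to `ρ³`, dominates `⟨t⟩³`. -/
lemma inv_pow_four_mul_le {t ρ : ℝ} (ht : 0 ≤ t) (hρ : 1 ≤ ρ) :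
    (ρ ^ 4 * (1 + (t - ρ) ^ 2))⁻¹ ≤ 17 * (jb t)⁻¹ ^ 2 * (ρ ^ 4)⁻¹ +
      36 * (jb t)⁻¹ ^ 3 * ((ρ ^ 2 - 1) / (ρ ^ 3 * (1 + (t - ρ) ^ 2))) := by
  have hρ_pos := zero_lt_one.trans_le hρ
  have ht_pos := jb_pos t
  have hw_pos : 0 < 1 + (t - ρ) ^ 2 := by positivity
  rcases le_or_gt (jb t ^ 2) (17 * (1 + (t - ρ) ^ 2)) with far | near
  · refine le_add_of_le_of_nonneg ?_ (mul_nonneg (by positivity)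
      (div_nonneg (sub_nonneg.2 (one_le_pow₀ hρ)) (mul_pos (pow_pos hρ_pos 3) hw_pos).le))
    rw [mul_inv_rev, inv_pow, ← div_eq_mul_inv 17]
    gcongr
    rwa [inv_le_comm₀ hw_pos (by positivity), inv_div, div_le_iff₀' (by norm_num)]
  · refine le_add_of_nonneg_of_le (by positivity) ?_
    rw [jb_sq] at near
    have ht_gt : 4 < t := by nlinarith
    have jb_le : jb t ≤ 3 * ρ := by
      refine le_of_sq_le_sq ?_ (by positivity)
      rw [jb_sq]
      nlinarith [ht_gt]
    have jb_cube_le : jb t ^ 3 ≤ 36 * (ρ ^ 2 - 1) * ρ := by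
      have : jb t ^ 3 ≤ (3 * ρ) ^ 3 := by gcongr
      nlinarith
    rw [inv_eq_one_div, inv_pow, ← div_eq_mul_inv, div_mul_div_comm,
      div_le_div_iff₀ (by positivity) (by positivity)]
    calc 1 * (jb t ^ 3 * (ρ ^ 3 * (1 + (t - ρ) ^ 2)))
        ≤ 1 * (36 * (ρ ^ 2 - 1) * ρ * (ρ ^ 3 * (1 + (t - ρ) ^ 2))) := by gcongr
      _ = 36 * (ρ ^ 2 - 1) * (ρ ^ 4 * (1 + (t - ρ) ^ 2)) := by ring

variable {ι : Type*} [Fintype ι] [DecidableEq ι] {f : (ι → ℝ) → ℝ}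

lemma integral_sq_div_coneWeight_le (hι : 3 ≤ Fintype.card ι) (hf : ContDiff ℝ 1 f)
    (hfc : HasCompactSupport f) {t : ℝ} (ht : 0 ≤ t) :
    ∫ x, f x ^ 2 / (japaneseBracket x ^ 4 * coneWeight t x) ≤
      17 * (jb t)⁻¹ ^ 2 * (∫ x, f x ^ 2 / japaneseBracket x ^ 4) +
        36 * π * (jb t)⁻¹ ^ 3 * ∫ x, ∑ i, partialDeriv i f x ^ 2 := by
  have hb : Continuous (japaneseBracket : (ι → ℝ) → ℝ) :=
    (contDiff_japaneseBracket (n := 0)).continuous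
  have hw : Continuous (coneWeight t : (ι → ℝ) → ℝ) := (contDiff_coneWeight (n := 0) t).continuous
  have hb_ne (x : ι → ℝ) : japaneseBracket x ≠ 0 := (japaneseBracket_pos x).ne'
  have hw_ne (x : ι → ℝ) : coneWeight t x ≠ 0 := (coneWeight_pos t x).ne'
  have int_lhs := integrable_mul_sq (w := fun x => (japaneseBracket x ^ 4 * coneWeight t x)⁻¹)
    (((hb.pow 4).mul hw).inv₀ fun x => mul_ne_zero (pow_ne_zero 4 (hb_ne x)) (hw_ne x))
    hf.continuous hfc
  have int_far := integrable_mul_sq (w := fun x => (japaneseBracket x ^ 4)⁻¹)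
    ((hb.pow 4).inv₀ fun x => pow_ne_zero 4 (hb_ne x)) hf.continuous hfc
  have int_near := integrable_mul_sq
    (w := fun x => (japaneseBracket x ^ 2 - 1) / (japaneseBracket x ^ 3 * coneWeight t x))
    (((hb.pow 2).sub continuous_const).div ((hb.pow 3).mul hw)
      fun x => mul_ne_zero (pow_ne_zero 3 (hb_ne x)) (hw_ne x)) hf.continuous hfc
  simp only [div_eq_inv_mul (f _ ^ 2)]
  calc _ ≤ ∫ x, (17 * (jb t)⁻¹ ^ 2 * ((japaneseBracket x ^ 4)⁻¹ * f x ^ 2) +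
        36 * (jb t)⁻¹ ^ 3 * ((japaneseBracket x ^ 2 - 1) /
          (japaneseBracket x ^ 3 * coneWeight t x) * f x ^ 2)) := by
        refine integral_mono int_lhs ((int_far.const_mul _).add (int_near.const_mul _)) fun x => ?_
        refine (mul_le_mul_of_nonneg_right (inv_pow_four_mul_le ht (one_le_japaneseBracket x))
          (sq_nonneg (f x))).trans_eq ?_
        rw [coneWeight]
        ring
    _ ≤ 17 * (jb t)⁻¹ ^ 2 * (∫ x, (japaneseBracket x ^ 4)⁻¹ * f x ^ 2) +
        36 * (jb t)⁻¹ ^ 3 * (π * ∫ x, ∑ i, partialDeriv i f x ^ 2) := by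
        have := jb_pos t
        rw [integral_add (int_far.const_mul _) (int_near.const_mul _), integral_const_mul,
          integral_const_mul]
        gcongr
        exact integral_div_coneWeight_mul_sq_le hι hf hfc t
    _ = _ := by ring

lemma sqrt_integral_sq_div_coneWeight_le (hι : 3 ≤ Fintype.card ι) (hf : ContDiff ℝ 1 f)
    (hfc : HasCompactSupport f) {t : ℝ} (ht : 0 ≤ t) :
    √(∫ x, f x ^ 2 / (japaneseBracket x ^ 4 * coneWeight t x)) ≤
      5 * (jb t)⁻¹ * √(∫ x, f x ^ 2 / japaneseBracket x ^ 4) +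
        11 * jb t ^ (-(3 : ℝ) / 2) * √(∫ x, ∑ i, partialDeriv i f x ^ 2) := by
  have ht_pos := jb_pos t
  have local_nonneg : 0 ≤ ∫ x, f x ^ 2 / japaneseBracket x ^ 4 :=
    integral_nonneg fun x => by positivity
  have grad_nonneg : 0 ≤ ∫ x, ∑ i, partialDeriv i f x ^ 2 :=
    integral_nonneg fun x => by positivity
  have jb_rpow_sq : (jb t ^ (-(3 : ℝ) / 2)) ^ 2 = (jb t)⁻¹ ^ 3 := by
    rw [← rpow_mul_natCast ht_pos.le, inv_pow, ← rpow_natCast (jb t) 3, ← rpow_neg ht_pos.le]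
    norm_num
  refine sqrt_le_iff.2 ⟨by positivity, (integral_sq_div_coneWeight_le hι hf hfc ht).trans ?_⟩
  calc 17 * (jb t)⁻¹ ^ 2 * (∫ x, f x ^ 2 / japaneseBracket x ^ 4) +
        36 * π * (jb t)⁻¹ ^ 3 * ∫ x, ∑ i, partialDeriv i f x ^ 2
      ≤ 5 ^ 2 * (jb t)⁻¹ ^ 2 * (∫ x, f x ^ 2 / japaneseBracket x ^ 4) +
        11 ^ 2 * (jb t)⁻¹ ^ 3 * ∫ x, ∑ i, partialDeriv i f x ^ 2 := by
        gcongr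
        · norm_num
        · linarith [pi_lt_d2]
    _ = (5 * (jb t)⁻¹ * √(∫ x, f x ^ 2 / japaneseBracket x ^ 4)) ^ 2 +
        (11 * jb t ^ (-(3 : ℝ) / 2) * √(∫ x, ∑ i, partialDeriv i f x ^ 2)) ^ 2 := by
        simp only [mul_pow, sq_sqrt local_nonneg, sq_sqrt grad_nonneg, jb_rpow_sq]
    _ ≤ _ := pow_add_pow_le (by positivity) (by positivity) two_ne_zero

end WeightedLocalEnergy

section KlainermanSideris

lemma abs_mul_le_of_le {y z c d : ℝ} (hy : |y| ≤ c) (hz : |z| ≤ d) : |y * z| ≤ c * d :=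
  (abs_mul y z).trans_le (mul_le_mul hy hz (abs_nonneg z) ((abs_nonneg y).trans hy))

variable {ι : Type*} [Fintype ι]

lemma abs_sum_le_card_mul {f : ι → ℝ} {c : ℝ} (h : ∀ i, |f i| ≤ c) :
    |∑ i, f i| ≤ Fintype.card ι * c :=
  (abs_sum_le_sum_abs _ _).trans <| (sum_le_card_nsmul _ _ c fun i _ => h i).trans_eq <| by
    rw [card_univ, nsmul_eq_mul]

lemma abs_apply_le_of_sum_sq_eq {x : ι → ℝ} {r : ℝ} (hr : 0 ≤ r) (hx : ∑ i, x i ^ 2 = r ^ 2)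
    (i : ι) : |x i| ≤ r :=
  abs_le_of_sq_le_sq (hx ▸ single_le_sum (fun j _ => sq_nonneg (x j)) (mem_univ i)) hr

variable {t r s a : ℝ} {x b : ι → ℝ} {H : ι → ι → ℝ}

lemma sub_mul_mul_add_eq (hx : ∑ i, x i ^ 2 = r ^ 2) :
    (t - r) * a * (t + r) = t * (t * a + ∑ j, x j * b j) -
      ∑ j, x j * (t * b j + ∑ k, x k * H k j) - r * (r * (a - ∑ k, H k k)) +
      ∑ j, ∑ k, x j * (x k * H j k - x j * H k k) := by
  have scaling_sum : ∑ j, x j * (t * b j + ∑ k, x k * H k j) =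
      t * ∑ j, x j * b j + ∑ j, ∑ k, x j * (x k * H j k) := by
    rw [sum_comm, mul_sum, ← sum_add_distrib]
    refine sum_congr rfl fun j _ => ?_
    rw [mul_add, mul_sum]
    congr 1
    · ring
    · exact sum_congr rfl fun k _ => by ring
  have trace_sum : ∑ j, ∑ k, x j * (x j * H k k) = r ^ 2 * ∑ k, H k k := by
    rw [← hx, sum_mul_sum]
    exact sum_congr rfl fun j _ => sum_congr rfl fun k _ => by ring
  simp only [mul_sub, sum_sub_distrib, scaling_sum, trace_sum]
  ring

lemma sub_mul_apply_mul_eq (hx : ∑ i, x i ^ 2 = r ^ 2) (hH : ∀ i j, H i j = H j i) (i : ι) :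
    (t - r) * b i * r = r * (t * b i + ∑ k, x k * H k i) - x i * (t * a + ∑ j, x j * b j) -
      r * ∑ k, (x k * H i k - x i * H k k) - ∑ k, x k * (x k * b i - x i * b k) +
      x i * ((t - r) * a + r * (a - ∑ k, H k k)) := by
  have trace_sum : ∑ k, (x k * H i k - x i * H k k) = ∑ k, x k * H k i - x i * ∑ k, H k k := by
    simp only [sum_sub_distrib, ← mul_sum, hH i]
  have radial_sum : ∑ k, x k * (x k * b i - x i * b k) = r ^ 2 * b i - x i * ∑ j, x j * b j := by
    rw [← hx, sum_mul, mul_sum, ← sum_sub_distrib]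
    exact sum_congr rfl fun k _ => by ring
  rw [trace_sum, radial_sum]
  ring

/- Klainerman-Sideris: here `a = ∂ₜ²u`, `b = ∇∂ₜu` and `H = ∇²u`, and `s` bounds the fields `S∂u`,
`Ω∂u` and `(t + r)□u`. -/
lemma abs_sub_mul_le_of_scaling_of_rotation (ht : 0 ≤ t) (hr : 0 ≤ r) (hx : ∑ i, x i ^ 2 = r ^ 2)
    (scaling_time : |t * a + ∑ j, x j * b j| ≤ s)
    (scaling_space : ∀ j, |t * b j + ∑ k, x k * H k j| ≤ s)
    (rotation_space : ∀ i j k, |x i * H j k - x j * H i k| ≤ s)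
    (wave : (t + r) * |a - ∑ k, H k k| ≤ s) :
    |t - r| * |a| ≤ (1 + Fintype.card ι + Fintype.card ι ^ 2) * s := by
  have hs : 0 ≤ s := (abs_nonneg _).trans scaling_time
  have hx_le := abs_apply_le_of_sum_sq_eq hr hx
  rcases (add_nonneg ht hr).eq_or_lt with h0 | h_pos
  · rw [show t - r = 0 by linarith, abs_zero, zero_mul]
    positivity
  have time_term : |t * (t * a + ∑ j, x j * b j)| ≤ t * s :=
    abs_mul_le_of_le (abs_of_nonneg ht).le scaling_time
  have space_term : |∑ j, x j * (t * b j + ∑ k, x k * H k j)| ≤ Fintype.card ι * (r * s) :=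
    abs_sum_le_card_mul fun j => abs_mul_le_of_le (hx_le j) (scaling_space j)
  have wave_term : |r * (r * (a - ∑ k, H k k))| ≤ r * s := by
    refine abs_mul_le_of_le (abs_of_nonneg hr).le ?_
    rw [abs_mul, abs_of_nonneg hr]
    exact (mul_le_mul_of_nonneg_right (by linarith) (abs_nonneg _)).trans wave
  have rotation_term : |∑ j, ∑ k, x j * (x k * H j k - x j * H k k)| ≤
      Fintype.card ι * (Fintype.card ι * (r * s)) :=
    abs_sum_le_card_mul fun j => abs_sum_le_card_mul fun k =>
      abs_mul_le_of_le (hx_le j) (rotation_space k j k)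
  refine le_of_mul_le_mul_right ?_ h_pos
  calc |t - r| * |a| * (t + r) = |(t - r) * a * (t + r)| := by
        rw [abs_mul, abs_mul, abs_of_pos h_pos]
    _ ≤ t * s + Fintype.card ι * (r * s) + r * s + Fintype.card ι * (Fintype.card ι * (r * s)) := by
        rw [sub_mul_mul_add_eq hx]
        exact (abs_add_le _ _).trans <| add_le_add ((abs_sub _ _).trans <| add_le_add
          ((abs_sub _ _).trans <| add_le_add time_term space_term) wave_term) rotation_term
    _ ≤ (1 + Fintype.card ι + Fintype.card ι ^ 2) * s * (t + r) := by
        have : 0 ≤ (Fintype.card ι + Fintype.card ι ^ 2) * (t * s) := by positivity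
        linarith

lemma abs_sub_mul_le_of_wave (ht : 0 ≤ t) (hr : 0 ≤ r) {c T : ℝ} (ha : |t - r| * |a| ≤ c * s)
    (wave : (t + r) * |a - T| ≤ s) : |t - r| * |T| ≤ (c + 1) * s := by
  have h_sub : |t - r| ≤ t + r := abs_sub_le_iff.2 ⟨by linarith, by linarith⟩
  calc |t - r| * |T| ≤ |t - r| * (|a| + |a - T|) := by
        gcongr
        linarith [abs_sub_abs_le_abs_sub T a, abs_sub_comm T a]
    _ ≤ |t - r| * |a| + (t + r) * |a - T| := by
        rw [mul_add]
        gcongr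
    _ ≤ (c + 1) * s := by linarith

lemma abs_sub_mul_apply_le_of_scaling_of_rotation (ht : 0 ≤ t) (hr : 0 ≤ r)
    (hx : ∑ i, x i ^ 2 = r ^ 2) (hH : ∀ i j, H i j = H j i)
    (scaling_time : |t * a + ∑ j, x j * b j| ≤ s)
    (scaling_space : ∀ j, |t * b j + ∑ k, x k * H k j| ≤ s)
    (rotation_time : ∀ i j, |x i * b j - x j * b i| ≤ s)
    (rotation_space : ∀ i j k, |x i * H j k - x j * H i k| ≤ s)
    (wave : (t + r) * |a - ∑ k, H k k| ≤ s) {c : ℝ} (ha : |t - r| * |a| ≤ c * s) (i : ι) :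
    |t - r| * |b i| ≤ (c + 2 * Fintype.card ι + 3) * s := by
  have hx_le := abs_apply_le_of_sum_sq_eq hr hx
  rcases hr.eq_or_lt with rfl | hr_pos
  · have hs : 0 ≤ s := (abs_nonneg _).trans scaling_time
    have hcs : 0 ≤ c * s := (mul_nonneg (abs_nonneg _) (abs_nonneg _)).trans ha
    have hx0 (k : ι) : x k = 0 := abs_nonpos_iff.1 (hx_le k)
    have hb : |t * b i| ≤ s := by simpa [hx0] using scaling_space i
    rw [sub_zero, ← abs_mul]
    have : 0 ≤ 2 * Fintype.card ι * s := by positivity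
    linarith
  have hr_le : |r| ≤ r := (abs_of_pos hr_pos).le
  have wave_term : |(t - r) * a + r * (a - ∑ k, H k k)| ≤ c * s + s := by
    refine (abs_add_le _ _).trans (add_le_add (by rwa [abs_mul]) ?_)
    rw [abs_mul, abs_of_pos hr_pos]
    exact (mul_le_mul_of_nonneg_right (by linarith) (abs_nonneg _)).trans wave
  refine le_of_mul_le_mul_right ?_ hr_pos
  calc |t - r| * |b i| * r = |(t - r) * b i * r| := by rw [abs_mul, abs_mul, abs_of_pos hr_pos]
    _ ≤ r * s + r * s + r * (Fintype.card ι * s) + Fintype.card ι * (r * s) + r * (c * s + s) := by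
        rw [sub_mul_apply_mul_eq (a := a) hx hH]
        exact (abs_add_le _ _).trans <| add_le_add ((abs_sub _ _).trans <| add_le_add
          ((abs_sub _ _).trans <| add_le_add ((abs_sub _ _).trans <| add_le_add
            (abs_mul_le_of_le hr_le (scaling_space i))
            (abs_mul_le_of_le (hx_le i) scaling_time))
            (abs_mul_le_of_le hr_le (abs_sum_le_card_mul fun k => rotation_space k i k)))
          (abs_sum_le_card_mul fun k => abs_mul_le_of_le (hx_le k) (rotation_time k i)))
          (abs_mul_le_of_le (hx_le i) wave_term)
    _ = (c + 2 * Fintype.card ι + 3) * s * r := by ring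

end KlainermanSideris

section TimeSlice

variable {n : ℕ}

/-- The restriction of a function on `ℝ×ℝⁿ` to the time slice `{t}×ℝⁿ`, as a function on `ℝⁿ`. -/
def timeSlice (t : ℝ) (f : (Fin (n + 1) → ℝ) → ℝ) : (Fin n → ℝ) → ℝ := fun x => f (Fin.cons t x)

lemma contDiff_finCons {m : WithTop ℕ∞} (t : ℝ) :
    ContDiff ℝ m (fun y : Fin n → ℝ => (Fin.cons t y : Fin (n + 1) → ℝ)) :=
  contDiff_pi.2 <| Fin.cases (by simpa using contDiff_const) fun i => by
    simpa using contDiff_apply ℝ ℝ i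

lemma contDiff_timeSlice {m : WithTop ℕ∞} {f : (Fin (n + 1) → ℝ) → ℝ} (hf : ContDiff ℝ m f)
    (t : ℝ) : ContDiff ℝ m (timeSlice t f) :=
  hf.comp (contDiff_finCons t)

lemma continuous_timeSlice {f : (Fin (n + 1) → ℝ) → ℝ} (hf : Continuous f) (t : ℝ) :
    Continuous (timeSlice t f) :=
  hf.comp (continuous_const.finCons continuous_id)

lemma hasCompactSupport_timeSlice {f : (Fin (n + 1) → ℝ) → ℝ} (hf : HasCompactSupport f)
    (t : ℝ) : HasCompactSupport (timeSlice t f) := by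
  have tail_cons : Function.LeftInverse (fun X : Fin (n + 1) → ℝ => Fin.tail X)
      (fun x : Fin n → ℝ => (Fin.cons t x : Fin (n + 1) → ℝ)) :=
    fun x => Fin.tail_cons (α := fun _ => ℝ) t x
  exact hf.comp_isClosedEmbedding
    (tail_cons.isClosedEmbedding continuous_id.finTail (continuous_const.finCons continuous_id))

lemma partialDeriv_timeSlice {f : (Fin (n + 1) → ℝ) → ℝ} (hf : Differentiable ℝ f) (t : ℝ)
    (j : Fin n) : partialDeriv j (timeSlice t f) = timeSlice t (partialDeriv j.succ f) := by
  funext x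
  have hasFDerivAt_cons : HasFDerivAt (fun y => (Fin.cons t y : Fin (n + 1) → ℝ)) _ x :=
    (hasFDerivAt_const t x).finCons (F' := fun _ => ℝ) (φs := id) (hasFDerivAt_id (𝕜 := ℝ) x)
  have h : fderiv ℝ (timeSlice t f) x = _ :=
    ((hf (Fin.cons t x)).hasFDerivAt.comp x hasFDerivAt_cons).fderiv
  rw [partialDeriv, h, ContinuousLinearMap.comp_apply, timeSlice, partialDeriv]
  congr 1
  refine funext (Fin.cases ?_ fun i => ?_) <;> simp [Pi.single_apply]

lemma partialDeriv_partialDeriv_timeSlice {f : (Fin (n + 1) → ℝ) → ℝ} (hf : ContDiff ℝ 2 f)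
    (t : ℝ) (i j : Fin n) : partialDeriv i (partialDeriv j (timeSlice t f)) =
      timeSlice t (partialDeriv i.succ (partialDeriv j.succ f)) := by
  rw [partialDeriv_timeSlice (hf.differentiable two_ne_zero), partialDeriv_timeSlice
    ((contDiff_partialDeriv (n := 1) hf _).differentiable one_ne_zero)]

lemma sum_sq_partialDeriv_timeSlice_le {f : (Fin (n + 1) → ℝ) → ℝ} (hf : Differentiable ℝ f)
    (t : ℝ) (x : Fin n → ℝ) : ∑ j, partialDeriv j (timeSlice t f) x ^ 2 ≤
      ∑ a, partialDeriv a f (Fin.cons t x) ^ 2 := by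
  simp only [partialDeriv_timeSlice hf, Fin.sum_univ_succ (n := n)]
  exact le_add_of_nonneg_left (sq_nonneg _)

end TimeSlice

section Gam

lemma contDiff_gam {f : Pt → ℝ} {n : WithTop ℕ∞} (hf : ContDiff ℝ (n + 1) f) (k : Fin 8) :
    ContDiff ℝ n (Gam k f) := by
  have contDiff_pd (a : Fin 4) : ContDiff ℝ n (pd a f) := contDiff_partialDeriv hf a
  have contDiff_mul_pd (a b : Fin 4) : ContDiff ℝ n fun X => X a * pd b f X :=
    (contDiff_apply ℝ ℝ a).mul (contDiff_pd b)
  have contDiff_rot (i j : Fin 4) : ContDiff ℝ n (rot i j f) :=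
    (contDiff_mul_pd i j).sub (contDiff_mul_pd j i)
  fin_cases k
  · exact contDiff_pd 0
  · exact contDiff_pd 1
  · exact contDiff_pd 2
  · exact contDiff_pd 3
  · exact contDiff_rot 1 2
  · exact contDiff_rot 1 3
  · exact contDiff_rot 2 3
  · change ContDiff ℝ n (scal f)
    exact ContDiff.sum fun a _ => contDiff_mul_pd a a

lemma gam_eq_zero_of_notMem_tsupport {f : Pt → ℝ} {X : Pt} (hX : X ∉ tsupport f) (k : Fin 8) :
    Gam k f X = 0 := by
  have pd_eq_zero : ∀ a, pd a f X = 0 := partialDeriv_eq_zero_of_notMem_tsupport hX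
  fin_cases k <;> simp [Gam, rot, scal, pd_eq_zero]

lemma contDiff_gamComp {f : Pt → ℝ} :
    ∀ {m : ℕ} (n : ℕ) (α : Fin m → Fin 8), ContDiff ℝ (n + m : ℕ) f → ContDiff ℝ n (GamComp α f)
  | 0, _, _, hf => hf
  | m + 1, n, _, hf =>
    contDiff_gam (contDiff_gamComp (n + 1) _ (by rwa [add_right_comm, add_assoc])) _

lemma hasCompactSupport_gamComp {f : Pt → ℝ} (hf : HasCompactSupport f) :
    ∀ {m : ℕ} (α : Fin m → Fin 8), HasCompactSupport (GamComp α f)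
  | 0, _ => hf
  | _ + 1, α =>
    .intro (hasCompactSupport_gamComp hf _) fun _ hX => gam_eq_zero_of_notMem_tsupport hX (α 0)

lemma abs_rot_le_of_abs_gam_le {f : Pt → ℝ} {X : Pt} {s : ℝ} (h : ∀ k, |Gam k f X| ≤ s)
    (i j : Fin 3) : |rot i.succ j.succ f X| ≤ s := by
  have of_lt : ∀ i j : Fin 3, i < j → |rot i.succ j.succ f X| ≤ s := by
    intro i j hij
    fin_cases i <;> fin_cases j <;> first | exact absurd hij (by decide) | skip
    exacts [h 4, h 5, h 6]
  rcases lt_trichotomy i j with hij | rfl | hji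
  · exact of_lt i j hij
  · simpa [rot] using (abs_nonneg _).trans (h 0)
  · simpa [rot, abs_sub_comm] using of_lt j i hji

end Gam

section SecondDerivatives

lemma rad_sq (x : Sp) : ∑ i, x i ^ 2 = rad x ^ 2 :=
  (sq_sqrt (by positivity)).symm

lemma jb_rad (x : Sp) : jb (rad x) = japaneseBracket x := by
  rw [jb, ← rad_sq, japaneseBracket]

/-- The sum of the squares of all functions whose `L²` norms make up `Qfac 1 u t`. -/
def qfacDensity (u : Pt → ℝ) (t : ℝ) (x : Sp) : ℝ :=
  (∑ m ∈ range 2, ∑ α : Fin m → Fin 8, ∑ a, GamComp α (pd a u) (Fin.cons t x) ^ 2) +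
    jb (t + rad x) ^ 2 * boxc 1 u (Fin.cons t x) ^ 2

variable {u : Pt → ℝ} {t : ℝ}

lemma jb_sq_mul_boxc_sq_le_qfacDensity (x : Sp) :
    jb (t + rad x) ^ 2 * boxc 1 u (Fin.cons t x) ^ 2 ≤ qfacDensity u t x :=
  le_add_of_nonneg_left (by positivity)

lemma sum_sq_gamComp_le_qfacDensity {m : ℕ} (hm : m ∈ range 2) (α : Fin m → Fin 8) (x : Sp) :
    ∑ a, GamComp α (pd a u) (Fin.cons t x) ^ 2 ≤ qfacDensity u t x :=
  calc ∑ a, GamComp α (pd a u) (Fin.cons t x) ^ 2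
      ≤ ∑ α : Fin m → Fin 8, ∑ a, GamComp α (pd a u) (Fin.cons t x) ^ 2 :=
        single_le_sum (f := fun α : Fin m → Fin 8 =>
          ∑ a, GamComp α (pd a u) (Fin.cons t x) ^ 2) (fun _ _ => by positivity) (mem_univ α)
    _ ≤ ∑ m ∈ range 2, ∑ α : Fin m → Fin 8, ∑ a, GamComp α (pd a u) (Fin.cons t x) ^ 2 :=
        single_le_sum (f := fun m => ∑ α : Fin m → Fin 8,
          ∑ a, GamComp α (pd a u) (Fin.cons t x) ^ 2) (fun _ _ => by positivity) hm
    _ ≤ qfacDensity u t x := le_add_of_nonneg_right (by positivity)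

lemma sum_sq_pd_le_qfacDensity (x : Sp) :
    ∑ a, pd a u (Fin.cons t x) ^ 2 ≤ qfacDensity u t x :=
  sum_sq_gamComp_le_qfacDensity (m := 0) (by simp) Fin.elim0 x

lemma abs_gam_pd_le_sqrt_qfacDensity (k : Fin 8) (a : Fin 4) (x : Sp) :
    |Gam k (pd a u) (Fin.cons t x)| ≤ √(qfacDensity u t x) :=
  abs_le_sqrt <| (single_le_sum (f := fun a => Gam k (pd a u) (Fin.cons t x) ^ 2)
    (fun _ _ => sq_nonneg _) (mem_univ a)).trans <|
      sum_sq_gamComp_le_qfacDensity (m := 1) (by simp) (fun _ => k) x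

lemma qfacDensity_nonneg (x : Sp) : 0 ≤ qfacDensity u t x :=
  (by positivity : (0 : ℝ) ≤ _).trans (sum_sq_pd_le_qfacDensity x)

lemma abs_pd_pd_le_sqrt_qfacDensity (a b : Fin 4) (x : Sp) :
    |pd b (pd a u) (Fin.cons t x)| ≤ √(qfacDensity u t x) := by
  have h (k : Fin 8) := abs_gam_pd_le_sqrt_qfacDensity (u := u) (t := t) k a x
  fin_cases b
  exacts [h 0, h 1, h 2, h 3]

lemma boxc_one (X : Pt) :
    boxc 1 u X = pd 0 (pd 0 u) X - ∑ j : Fin 3, pd j.succ (pd j.succ u) X := by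
  rw [boxc, one_pow, one_mul]

lemma add_rad_mul_abs_sub_le_sqrt_qfacDensity (x : Sp) :
    (t + rad x) * |pd 0 (pd 0 u) (Fin.cons t x) -
      ∑ j : Fin 3, pd j.succ (pd j.succ u) (Fin.cons t x)| ≤ √(qfacDensity u t x) := by
  rw [← boxc_one]
  refine le_sqrt_of_sq_le (le_trans ?_ (jb_sq_mul_boxc_sq_le_qfacDensity x))
  rw [mul_pow, sq_abs, jb_sq]
  gcongr
  linarith

lemma abs_scaling_le_sqrt_qfacDensity (a : Fin 4) (x : Sp) :
    |t * pd 0 (pd a u) (Fin.cons t x) + ∑ j : Fin 3, x j * pd j.succ (pd a u) (Fin.cons t x)| ≤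
      √(qfacDensity u t x) := by
  have h : |scal (pd a u) (Fin.cons t x)| ≤ √(qfacDensity u t x) :=
    abs_gam_pd_le_sqrt_qfacDensity 7 a x
  rwa [scal, Fin.sum_univ_succ] at h

lemma abs_rotation_le_sqrt_qfacDensity (a : Fin 4) (i j : Fin 3) (x : Sp) :
    |x i * pd j.succ (pd a u) (Fin.cons t x) - x j * pd i.succ (pd a u) (Fin.cons t x)| ≤
      √(qfacDensity u t x) :=
  abs_rot_le_of_abs_gam_le (abs_gam_pd_le_sqrt_qfacDensity · a x) i j

lemma abs_scaling_comm_le_sqrt_qfacDensity (hu : ContDiff ℝ 2 u) (j : Fin 3) (x : Sp) :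
    |t * pd j.succ (pd 0 u) (Fin.cons t x) +
      ∑ k : Fin 3, x k * pd k.succ (pd j.succ u) (Fin.cons t x)| ≤ √(qfacDensity u t x) := by
  have h : pd j.succ (pd 0 u) (Fin.cons t x) = pd 0 (pd j.succ u) (Fin.cons t x) :=
    partialDeriv_comm hu _ _ _
  exact h ▸ abs_scaling_le_sqrt_qfacDensity j.succ x

lemma abs_sub_rad_mul_pd_zero_pd_zero_le (hu : ContDiff ℝ 2 u) (ht : 0 ≤ t) (x : Sp) :
    |t - rad x| * |pd 0 (pd 0 u) (Fin.cons t x)| ≤ 13 * √(qfacDensity u t x) :=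
  (abs_sub_mul_le_of_scaling_of_rotation (x := x)
    (a := pd 0 (pd 0 u) (Fin.cons t x)) (b := fun j => pd j.succ (pd 0 u) (Fin.cons t x))
    (H := fun i j => pd i.succ (pd j.succ u) (Fin.cons t x)) ht (sqrt_nonneg _) (rad_sq x)
    (abs_scaling_le_sqrt_qfacDensity 0 x) (abs_scaling_comm_le_sqrt_qfacDensity hu · x)
    (fun i j k => abs_rotation_le_sqrt_qfacDensity k.succ i j x)
    (add_rad_mul_abs_sub_le_sqrt_qfacDensity x)).trans_eq (by norm_num)

lemma abs_sub_rad_mul_laplacian_le (hu : ContDiff ℝ 2 u) (ht : 0 ≤ t) (x : Sp) :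
    |t - rad x| * |∑ j : Fin 3, pd j.succ (pd j.succ u) (Fin.cons t x)| ≤
      14 * √(qfacDensity u t x) :=
  (abs_sub_mul_le_of_wave ht (sqrt_nonneg _) (abs_sub_rad_mul_pd_zero_pd_zero_le hu ht x)
    (add_rad_mul_abs_sub_le_sqrt_qfacDensity x)).trans_eq (by norm_num)

lemma abs_sub_rad_mul_pd_succ_pd_zero_le (hu : ContDiff ℝ 2 u) (ht : 0 ≤ t) (j : Fin 3) (x : Sp) :
    |t - rad x| * |pd j.succ (pd 0 u) (Fin.cons t x)| ≤ 22 * √(qfacDensity u t x) :=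
  (abs_sub_mul_apply_le_of_scaling_of_rotation (x := x)
    (a := pd 0 (pd 0 u) (Fin.cons t x)) (b := fun j => pd j.succ (pd 0 u) (Fin.cons t x))
    (H := fun i j => pd i.succ (pd j.succ u) (Fin.cons t x)) ht (sqrt_nonneg _) (rad_sq x)
    (fun i j => partialDeriv_comm hu i.succ j.succ _) (abs_scaling_le_sqrt_qfacDensity 0 x)
    (abs_scaling_comm_le_sqrt_qfacDensity hu · x)
    (fun i j => abs_rotation_le_sqrt_qfacDensity 0 i j x)
    (fun i j k => abs_rotation_le_sqrt_qfacDensity k.succ i j x)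
    (add_rad_mul_abs_sub_le_sqrt_qfacDensity x) (abs_sub_rad_mul_pd_zero_pd_zero_le hu ht x)
    j).trans_eq (by norm_num)

lemma coneWeight_le {ι : Type*} [Fintype ι] {x : ι → ℝ} {r : ℝ} (hr : 0 ≤ r)
    (hx : ∑ i, x i ^ 2 = r ^ 2) (t : ℝ) : coneWeight t x ≤ 3 + 2 * (t - r) ^ 2 := by
  have hρ := one_le_japaneseBracket x
  have hρ_sq := japaneseBracket_sq x
  rw [hx] at hρ_sq
  have hρ_sub : (japaneseBracket x - r) ^ 2 ≤ 1 := by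
    have : (japaneseBracket x - r) * (japaneseBracket x + r) = 1 := by linarith
    nlinarith
  rw [coneWeight]
  linarith [sq_nonneg ((t - r) + (japaneseBracket x - r))]

lemma coneWeight_mul_sq_le {ι : Type*} [Fintype ι] {x : ι → ℝ} {r y c d s : ℝ} (hr : 0 ≤ r)
    (hx : ∑ i, x i ^ 2 = r ^ 2) (hy : |y| ≤ d * s) (hty : |t - r| * |y| ≤ c * s) :
    coneWeight t x * y ^ 2 ≤ (3 * d ^ 2 + 2 * c ^ 2) * s ^ 2 := by
  have hy_sq : y ^ 2 ≤ (d * s) ^ 2 := sq_le_sq.2 (hy.trans (le_abs_self _))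
  have hty_sq : ((t - r) * y) ^ 2 ≤ (c * s) ^ 2 :=
    sq_le_sq.2 ((abs_mul _ _).trans_le (hty.trans (le_abs_self _)))
  calc coneWeight t x * y ^ 2 ≤ (3 + 2 * (t - r) ^ 2) * y ^ 2 :=
        mul_le_mul_of_nonneg_right (coneWeight_le hr hx t) (sq_nonneg y)
    _ ≤ (3 * d ^ 2 + 2 * c ^ 2) * s ^ 2 := by linarith

lemma sum_le_sq_sum_sqrt {κ : Type*} (s : Finset κ) {f : κ → ℝ} (hf : ∀ i ∈ s, 0 ≤ f i) :
    ∑ i ∈ s, f i ≤ (∑ i ∈ s, √(f i)) ^ 2 :=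
  (sum_congr rfl fun i hi => (sq_sqrt (hf i hi)).symm).trans_le
    (sum_sq_le_sq_sum_of_nonneg fun _ _ => sqrt_nonneg _)

lemma continuous_boxc (hu : ContDiff ℝ 2 u) (c : ℝ) : Continuous (boxc c u) := by
  have continuous_pd_pd (a : Fin 4) : Continuous (pd a (pd a u)) :=
    continuous_partialDeriv (contDiff_partialDeriv (n := 1) hu a) a
  exact (continuous_pd_pd 0).sub
    (continuous_const.mul (continuous_finsetSum _ fun j _ => continuous_pd_pd j.succ))

lemma hasCompactSupport_boxc (huc : HasCompactSupport u) (c : ℝ) :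
    HasCompactSupport (boxc c u) := by
  refine .intro huc fun X hX => ?_
  have pd_pd_eq_zero (a : Fin 4) : pd a (pd a u) X = 0 :=
    partialDeriv_eq_zero_of_notMem_tsupport (fun h => hX (tsupport_partialDeriv_subset u a h)) a
  simp [boxc, pd_pd_eq_zero]

lemma continuous_rad : Continuous rad := by
  unfold rad
  fun_prop

lemma continuous_jb : Continuous jb := by
  unfold jb
  fun_prop

lemma integrable_sum_sq_gamComp_pd {m : ℕ} (hu : ContDiff ℝ (m + 1) u)
    (huc : HasCompactSupport u) (t : ℝ) (α : Fin m → Fin 8) :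
    Integrable fun x : Sp => ∑ a, GamComp α (pd a u) (Fin.cons t x) ^ 2 :=
  integrable_finsetSum _ fun a _ => by
    have h : ContDiff ℝ ((0 + m : ℕ) : WithTop ℕ∞) (pd a u) := by
      rw [zero_add]
      exact contDiff_partialDeriv hu a
    simpa [timeSlice] using integrable_mul_sq continuous_const (w := fun _ => 1)
      (continuous_timeSlice (contDiff_gamComp 0 α h).continuous t)
      (hasCompactSupport_timeSlice
        (hasCompactSupport_gamComp (hasCompactSupport_partialDeriv huc a) α) t)

lemma integrable_jb_sq_mul_boxc_sq (hu : ContDiff ℝ 2 u) (huc : HasCompactSupport u) (c t : ℝ) :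
    Integrable fun x : Sp => jb (t + rad x) ^ 2 * boxc c u (Fin.cons t x) ^ 2 :=
  integrable_mul_sq ((continuous_jb.comp (continuous_const.add continuous_rad)).pow 2)
    (continuous_timeSlice (continuous_boxc hu c) t)
    (hasCompactSupport_timeSlice (hasCompactSupport_boxc huc c) t)

lemma integrable_sum_sq_gamComp_pd_of_mem_range {m : ℕ} (hm : m ∈ range 2)
    (hu : ContDiff ℝ 2 u) (huc : HasCompactSupport u) (t : ℝ) (α : Fin m → Fin 8) :
    Integrable fun x : Sp => ∑ a, GamComp α (pd a u) (Fin.cons t x) ^ 2 :=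
  integrable_sum_sq_gamComp_pd (hu.of_le (by exact_mod_cast mem_range.1 hm)) huc t α

lemma integrable_qfacDensity (hu : ContDiff ℝ 2 u) (huc : HasCompactSupport u) (t : ℝ) :
    Integrable (qfacDensity u t) :=
  (integrable_finsetSum _ fun _ hm => integrable_finsetSum _ fun α _ =>
    integrable_sum_sq_gamComp_pd_of_mem_range hm hu huc t α).add
    (integrable_jb_sq_mul_boxc_sq hu huc 1 t)

lemma Qfac_nonneg (c : ℝ) (u : Pt → ℝ) (t : ℝ) : 0 ≤ Qfac c u t := by
  unfold Qfac
  positivity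

lemma integral_qfacDensity_le_sq_Qfac (hu : ContDiff ℝ 2 u) (huc : HasCompactSupport u) (t : ℝ) :
    ∫ x, qfacDensity u t x ≤ Qfac 1 u t ^ 2 := by
  have gam_integrable {m : ℕ} (hm : m ∈ range 2) (α : Fin m → Fin 8) :=
    integrable_sum_sq_gamComp_pd_of_mem_range hm hu huc t α
  have gam_nonneg {m : ℕ} (α : Fin m → Fin 8) :
      0 ≤ ∫ x : Sp, ∑ a, GamComp α (pd a u) (Fin.cons t x) ^ 2 :=
    integral_nonneg fun x => sum_nonneg fun a _ => sq_nonneg _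
  have box_nonneg : 0 ≤ ∫ x : Sp, jb (t + rad x) ^ 2 * boxc 1 u (Fin.cons t x) ^ 2 :=
    integral_nonneg fun x => mul_nonneg (sq_nonneg _) (sq_nonneg _)
  have gam_le : ∑ m ∈ range 2, ∑ α : Fin m → Fin 8,
      ∫ x : Sp, ∑ a, GamComp α (pd a u) (Fin.cons t x) ^ 2 ≤
      (∑ m ∈ range 2, ∑ α : Fin m → Fin 8,
        √(∫ x : Sp, ∑ a, GamComp α (pd a u) (Fin.cons t x) ^ 2)) ^ 2 := by
    simpa only [sum_sigma'] using sum_le_sq_sum_sqrt _ fun p _ => gam_nonneg p.2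
  have integral_eq : ∫ x, qfacDensity u t x = ∑ m ∈ range 2, ∑ α : Fin m → Fin 8,
      (∫ x : Sp, ∑ a, GamComp α (pd a u) (Fin.cons t x) ^ 2) +
      ∫ x : Sp, jb (t + rad x) ^ 2 * boxc 1 u (Fin.cons t x) ^ 2 := by
    unfold qfacDensity
    rw [integral_add (integrable_finsetSum _ fun m hm => integrable_finsetSum _ fun α _ =>
      gam_integrable hm α) (integrable_jb_sq_mul_boxc_sq hu huc 1 t),
      integral_finsetSum _ fun m hm => integrable_finsetSum _ fun α _ => gam_integrable hm α]
    congr 1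
    exact sum_congr rfl fun m hm => integral_finsetSum _ fun α _ => gam_integrable hm α
  rw [integral_eq, Qfac]
  simp only [← sqrt_eq_rpow]
  rw [add_sq, sq_sqrt box_nonneg]
  gcongr
  exact gam_le.trans (le_add_of_nonneg_right (by positivity))

lemma coneWeight_mul_sq_laplacian_le (hu : ContDiff ℝ 2 u) (ht : 0 ≤ t) (x : Sp) :
    coneWeight t x * (∑ j, partialDeriv j (partialDeriv j (timeSlice t u)) x) ^ 2 ≤
      1000 * qfacDensity u t x := by
  have laplacian_le : |∑ j : Fin 3, pd j.succ (pd j.succ u) (Fin.cons t x)| ≤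
      3 * √(qfacDensity u t x) := by
    simpa using abs_sum_le_card_mul fun j : Fin 3 => abs_pd_pd_le_sqrt_qfacDensity j.succ j.succ x
  have h := coneWeight_mul_sq_le (sqrt_nonneg _) (rad_sq x) laplacian_le
    (abs_sub_rad_mul_laplacian_le hu ht x)
  rw [sq_sqrt (qfacDensity_nonneg x)] at h
  simp only [partialDeriv_partialDeriv_timeSlice hu]
  exact h.trans (by linarith [qfacDensity_nonneg (u := u) (t := t) x])

lemma coneWeight_mul_sq_pd_pd_zero_le (hu : ContDiff ℝ 2 u) (ht : 0 ≤ t) (a : Fin 4) (x : Sp) :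
    coneWeight t x * pd a (pd 0 u) (Fin.cons t x) ^ 2 ≤ 1000 * qfacDensity u t x := by
  have pd_le : |pd a (pd 0 u) (Fin.cons t x)| ≤ 1 * √(qfacDensity u t x) :=
    (abs_pd_pd_le_sqrt_qfacDensity 0 a x).trans_eq (one_mul _).symm
  have sub_mul_pd_le : |t - rad x| * |pd a (pd 0 u) (Fin.cons t x)| ≤
      22 * √(qfacDensity u t x) := by
    refine Fin.cases ?_ (fun j => abs_sub_rad_mul_pd_succ_pd_zero_le hu ht j x) a
    exact (abs_sub_rad_mul_pd_zero_pd_zero_le hu ht x).trans (by gcongr; norm_num)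
  have h := coneWeight_mul_sq_le (sqrt_nonneg _) (rad_sq x) pd_le sub_mul_pd_le
  rw [sq_sqrt (qfacDensity_nonneg x)] at h
  exact h.trans (by linarith [qfacDensity_nonneg (u := u) (t := t) x])

lemma coneWeight_mul_sum_sq_pd_pd_le (hu : ContDiff ℝ 2 u) (ht : 0 ≤ t) (x : Sp) :
    coneWeight t x * ∑ a, ∑ b, pd a (pd b u) (Fin.cons t x) ^ 2 ≤ 7000 * qfacDensity u t x +
      coneWeight t x * ∑ i, ∑ j, partialDeriv i (partialDeriv j (timeSlice t u)) x ^ 2 := by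
  have time_le := coneWeight_mul_sq_pd_pd_zero_le hu ht 0 x
  have mixed_le : ∑ j : Fin 3, coneWeight t x * pd j.succ (pd 0 u) (Fin.cons t x) ^ 2 ≤
      3 * (1000 * qfacDensity u t x) :=
    (sum_le_card_nsmul _ _ _ fun j _ => coneWeight_mul_sq_pd_pd_zero_le hu ht j.succ x).trans_eq
      (by simp)
  have pd_comm (j : Fin 3) :
      pd 0 (pd j.succ u) (Fin.cons t x) = pd j.succ (pd 0 u) (Fin.cons t x) :=
    partialDeriv_comm hu _ _ _
  have hessian_eq (i j : Fin 3) : partialDeriv i (partialDeriv j (timeSlice t u)) x =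
      pd i.succ (pd j.succ u) (Fin.cons t x) :=
    congrFun (partialDeriv_partialDeriv_timeSlice hu t i j) x
  simp only [hessian_eq, Fin.sum_univ_succ (n := 3), pd_comm, sum_add_distrib, mul_add,
    ← mul_sum] at mixed_le ⊢
  linarith

lemma integral_coneWeight_mul_sum_sq_pd_pd_le (hu : ContDiff ℝ 3 u) (huc : HasCompactSupport u)
    (ht : 0 ≤ t) :
    ∫ x : Sp, coneWeight t x * ∑ a, ∑ b, pd a (pd b u) (Fin.cons t x) ^ 2 ≤
      12000 * Qfac 1 u t ^ 2 := by
  have hu₂ : ContDiff ℝ 2 u := hu.of_le (by norm_num)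
  have hD := integrable_qfacDensity hu₂ huc t
  have hf := contDiff_timeSlice hu t
  have hfc := hasCompactSupport_timeSlice huc t
  have elliptic := integral_mul_sum_sq_hessian_le (contDiff_coneWeight t) (coneWeight_pos t)
    (sum_sq_partialDeriv_coneWeight_le t) hf hfc
  have laplacian_le : ∫ x, coneWeight t x *
      (∑ j, partialDeriv j (partialDeriv j (timeSlice t u)) x) ^ 2 ≤
      1000 * ∫ x, qfacDensity u t x := by
    rw [← integral_const_mul]
    exact integral_mono_of_nonneg (.of_forall fun x => by have := coneWeight_pos t x; positivity)
      (hD.const_mul _) (.of_forall (coneWeight_mul_sq_laplacian_le hu₂ ht))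
  have gradient_le : ∫ x, ∑ j, partialDeriv j (timeSlice t u) x ^ 2 ≤ ∫ x, qfacDensity u t x :=
    integral_mono_of_nonneg (.of_forall fun x => by positivity) hD
      (.of_forall fun x =>
        (sum_sq_partialDeriv_timeSlice_le (hu.differentiable three_ne_zero) t x).trans
          (sum_sq_pd_le_qfacDensity x))
  have hessian_integrable : Integrable fun x => coneWeight t x *
      ∑ i, ∑ j, partialDeriv i (partialDeriv j (timeSlice t u)) x ^ 2 := by
    simp only [mul_sum]
    exact integrable_finsetSum _ fun i _ => integrable_finsetSum _ fun j _ => integrable_mul_sq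
      (contDiff_coneWeight (n := 0) t).continuous
      (continuous_partialDeriv (contDiff_partialDeriv (hf.of_le (by norm_num)) j) i)
      (hasCompactSupport_partialDeriv (hasCompactSupport_partialDeriv hfc j) i)
  have split := integral_mono_of_nonneg
    (.of_forall fun x => by have := coneWeight_pos t x; positivity)
    ((hD.const_mul 7000).add hessian_integrable)
    (.of_forall (coneWeight_mul_sum_sq_pd_pd_le hu₂ ht))
  rw [integral_add' (hD.const_mul _) hessian_integrable, integral_const_mul] at split
  linarith [integral_qfacDensity_le_sq_Qfac hu₂ huc t, sq_nonneg (Qfac 1 u t)]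


lemma sq_d2abs_le (X : Pt) : d2abs u X ^ 2 ≤ 16 * ∑ a, ∑ b, pd a (pd b u) X ^ 2 := by
  have sq_sum_le (f : Fin 4 → ℝ) : (∑ a, f a) ^ 2 ≤ 4 * ∑ a, f a ^ 2 := by
    simpa using sq_sum_le_card_mul_sum_sq (s := univ) (f := f)
  calc d2abs u X ^ 2 ≤ 4 * ∑ a, (∑ b, |pd a (pd b u) X|) ^ 2 := sq_sum_le _
    _ ≤ 4 * ∑ a, 4 * ∑ b, |pd a (pd b u) X| ^ 2 := by gcongr; exact sq_sum_le _
    _ = 16 * ∑ a, ∑ b, pd a (pd b u) X ^ 2 := by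
        simp only [sq_abs, ← mul_sum, ← mul_assoc]
        norm_num

lemma continuous_d2abs (hu : ContDiff ℝ 2 u) : Continuous (d2abs u) :=
  continuous_finsetSum _ fun a _ => continuous_finsetSum _ fun b _ =>
    (continuous_partialDeriv (contDiff_partialDeriv (n := 1) hu b) a).abs

lemma hasCompactSupport_d2abs (huc : HasCompactSupport u) : HasCompactSupport (d2abs u) := by
  refine .intro huc fun X hX => ?_
  have pd_pd_eq_zero (a b : Fin 4) : pd a (pd b u) X = 0 :=
    partialDeriv_eq_zero_of_notMem_tsupport (fun h => hX (tsupport_partialDeriv_subset u b h)) a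
  simp [d2abs, pd_pd_eq_zero]

lemma sqrt_integral_coneWeight_mul_sq_d2abs_le (hu : ContDiff ℝ 3 u) (huc : HasCompactSupport u)
    (ht : 0 ≤ t) :
    √(∫ x : Sp, coneWeight t x * timeSlice t (d2abs u) x ^ 2) ≤ 440 * Qfac 1 u t := by
  have hQ := Qfac_nonneg 1 u t
  have pd_pd_integrable : Integrable fun x : Sp =>
      coneWeight t x * ∑ a, ∑ b, pd a (pd b u) (Fin.cons t x) ^ 2 := by
    simp only [mul_sum]
    exact integrable_finsetSum _ fun a _ => integrable_finsetSum _ fun b _ => integrable_mul_sq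
      (contDiff_coneWeight (n := 0) t).continuous
      (continuous_timeSlice (continuous_partialDeriv
        (contDiff_partialDeriv (hu.of_le (by norm_num)) b) a) t)
      (hasCompactSupport_timeSlice
        (hasCompactSupport_partialDeriv (hasCompactSupport_partialDeriv huc b) a) t)
  refine sqrt_le_iff.2 ⟨by positivity, ?_⟩
  calc ∫ x : Sp, coneWeight t x * timeSlice t (d2abs u) x ^ 2
      ≤ ∫ x : Sp, 16 * (coneWeight t x * ∑ a, ∑ b, pd a (pd b u) (Fin.cons t x) ^ 2) := by
        refine integral_mono_of_nonneg
          (.of_forall fun x => mul_nonneg (coneWeight_pos t x).le (sq_nonneg _))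
          (pd_pd_integrable.const_mul 16) (.of_forall fun x => ?_)
        exact (mul_le_mul_of_nonneg_left (sq_d2abs_le _) (coneWeight_pos t x).le).trans_eq
          (mul_left_comm _ _ _)
    _ ≤ 16 * (12000 * Qfac 1 u t ^ 2) := by
        rw [integral_const_mul]
        gcongr
        exact integral_coneWeight_mul_sum_sq_pd_pd_le hu huc ht
    _ ≤ (440 * Qfac 1 u t) ^ 2 := by linarith [sq_nonneg (Qfac 1 u t)]

lemma sqrt_integral_sq_timeSlice_div_coneWeight_le {v : Pt → ℝ} (hv : ContDiff ℝ 1 v)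
    (hvc : HasCompactSupport v) (ht : 0 ≤ t) :
    √(∫ x : Sp, timeSlice t v x ^ 2 / (japaneseBracket x ^ 4 * coneWeight t x)) ≤
      5 * (jb t)⁻¹ * √(∫ x : Sp, timeSlice t v x ^ 2 / japaneseBracket x ^ 4) +
        11 * jb t ^ (-(3 : ℝ) / 2) * √(∫ x : Sp, ∑ a, pd a v (Fin.cons t x) ^ 2) := by
  have ht_pos := jb_pos t
  have pd_integrable : Integrable fun x : Sp => ∑ a, pd a v (Fin.cons t x) ^ 2 :=
    integrable_sum_sq_gamComp_pd (m := 0) (by simpa using hv) hvc t Fin.elim0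
  refine (sqrt_integral_sq_div_coneWeight_le (by simp) (contDiff_timeSlice hv t)
    (hasCompactSupport_timeSlice hvc t) ht).trans ?_
  gcongr _ + _ * √?_
  exact integral_mono_of_nonneg (.of_forall fun x => by positivity) pd_integrable
    (.of_forall (sum_sq_partialDeriv_timeSlice_le (hv.differentiable one_ne_zero) t))

lemma integral_d2abs_mul_abs_div_le_sqrt_mul_sqrt {v : Pt → ℝ} (hu : ContDiff ℝ 2 u)
    (huc : HasCompactSupport u) (hv : Continuous v) (hvc : HasCompactSupport v) (t : ℝ) :
    ∫ x : Sp, d2abs u (Fin.cons t x) * |v (Fin.cons t x)| / japaneseBracket x ^ 2 ≤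
      √(∫ x : Sp, coneWeight t x * timeSlice t (d2abs u) x ^ 2) *
        √(∫ x : Sp, timeSlice t v x ^ 2 / (japaneseBracket x ^ 4 * coneWeight t x)) := by
  have hb_ne (x : Sp) : japaneseBracket x ^ 2 ≠ 0 := pow_ne_zero 2 (japaneseBracket_pos x).ne'
  have hg : Continuous fun x : Sp => |timeSlice t v x| / japaneseBracket x ^ 2 :=
    (continuous_timeSlice hv t).abs.div
      ((contDiff_japaneseBracket (n := 0)).continuous.pow 2) hb_ne
  have hgc : HasCompactSupport fun x : Sp => |timeSlice t v x| / japaneseBracket x ^ 2 :=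
    .intro (hasCompactSupport_timeSlice hvc t) fun x hx => by
      simp [image_eq_zero_of_notMem_tsupport hx]
  have h := integral_mul_le_sqrt_mul_sqrt (contDiff_coneWeight (n := 0) t).continuous
    (coneWeight_pos t) (continuous_timeSlice (continuous_d2abs hu) t)
    (hasCompactSupport_timeSlice (hasCompactSupport_d2abs huc) t) hg hgc
  simpa only [timeSlice, mul_div_assoc, div_pow, sq_abs, ← pow_mul, div_div] using h

end SecondDerivatives

theorem stmt_15_general :
    ∃ C : ℝ, 0 < C ∧
      ∀ (u v : Pt → ℝ), ContDiff ℝ 3 u → HasCompactSupport u →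
        ContDiff ℝ 1 v → HasCompactSupport v →
        ∀ t : ℝ, 0 ≤ t →
          ∫ x : Sp, d2abs u (Fin.cons t x) * |v (Fin.cons t x)| / jb (rad x) ^ 2
            ≤ C * (jb t)⁻¹ * Qfac 1 u t *
                (∫ x : Sp, (v (Fin.cons t x)) ^ 2 / jb (rad x) ^ 4) ^ ((1:ℝ)/2)
              + C * (jb t) ^ (-(3:ℝ)/2) * Qfac 1 u t *
                  (∫ x : Sp, ∑ a, (pd a v (Fin.cons t x)) ^ 2) ^ ((1:ℝ)/2) := by
  refine ⟨4840, by norm_num, fun u v hu huc hv hvc t ht => ?_⟩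
  simp only [jb_rad, ← sqrt_eq_rpow]
  have hQ := Qfac_nonneg 1 u t
  have ht_pos := jb_pos t
  calc ∫ x : Sp, d2abs u (Fin.cons t x) * |v (Fin.cons t x)| / japaneseBracket x ^ 2
      ≤ √(∫ x : Sp, coneWeight t x * timeSlice t (d2abs u) x ^ 2) *
        √(∫ x : Sp, timeSlice t v x ^ 2 / (japaneseBracket x ^ 4 * coneWeight t x)) :=
        integral_d2abs_mul_abs_div_le_sqrt_mul_sqrt (hu.of_le (by norm_num)) huc hv.continuous hvc t
    _ ≤ 440 * Qfac 1 u t *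
        (5 * (jb t)⁻¹ * √(∫ x : Sp, timeSlice t v x ^ 2 / japaneseBracket x ^ 4) +
          11 * jb t ^ (-(3 : ℝ) / 2) * √(∫ x : Sp, ∑ a, pd a v (Fin.cons t x) ^ 2)) := by
        gcongr
        · exact sqrt_integral_coneWeight_mul_sq_d2abs_le hu huc ht
        · exact sqrt_integral_sq_timeSlice_div_coneWeight_le hv hvc ht
    _ = 2200 * (jb t)⁻¹ * Qfac 1 u t * √(∫ x : Sp, timeSlice t v x ^ 2 / japaneseBracket x ^ 4) +
        4840 * jb t ^ (-(3 : ℝ) / 2) * Qfac 1 u t *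
          √(∫ x : Sp, ∑ a, pd a v (Fin.cons t x) ^ 2) := by ring
    _ ≤ _ := by
        simp only [timeSlice]
        gcongr
        norm_num

/-- inequality (3.7) of the paper, Corollary 3.4. -/
theorem stmt_15 :
    ∃ C : ℝ, 0 < C ∧
      ∀ (u v : Pt → ℝ), ContDiff ℝ (⊤ : ℕ∞) u → HasCompactSupport u →
        ContDiff ℝ (⊤ : ℕ∞) v → HasCompactSupport v →
        ∀ t : ℝ, 0 ≤ t →
          ∫ x : Sp, d2abs u (Fin.cons t x) * |v (Fin.cons t x)| / jb (rad x) ^ 2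
            ≤ C * (jb t)⁻¹ * Qfac 1 u t *
                (∫ x : Sp, (v (Fin.cons t x)) ^ 2 / jb (rad x) ^ 4) ^ ((1:ℝ)/2)
              + C * (jb t) ^ (-(4:ℝ)/3) * Qfac 1 u t *
                  (∫ x : Sp, ∑ a, (pd a v (Fin.cons t x)) ^ 2) ^ ((1:ℝ)/2) := by
  obtain ⟨C, hC, h⟩ := stmt_15_general
  refine ⟨C, hC, fun u v hu huc hv hvc t ht =>
    (h u v (contDiff_infty.1 hu 3) huc (contDiff_infty.1 hv 1) hvc t ht).trans ?_⟩
  have hQ := Qfac_nonneg 1 u t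
  have jb_rpow_le : jb t ^ (-(3 : ℝ) / 2) ≤ jb t ^ (-(4 : ℝ) / 3) :=
    rpow_le_rpow_of_exponent_le (one_le_jb t) (by norm_num)
  gcongr
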